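/- (Weyl's alternative.) If for some z₀ ∈ ℂ every solution of (ℓ − z₀)u = 0 lies in L² near a, then for every z ∈ ℂ every solution of (ℓ − z)u = 0 lies in L² near a; consequently, at the endpoint a, ℓ is either in the limit-circle case or in the limit-point case, and the same holds at the endpoint b. -/

import Mathlib

open MeasureTheory Set Filter
open scoped ENNReal NNReal Classical

/-- Forward shift of a time scale. -/
noncomputable def tsSigma (T : Set ℝ) (t : ℝ) : ℝ :=
  if ({s | s ∈ T ∧ t < s}).Nonempty then sInf {s | s ∈ T ∧ t < s} else sSup T

/-- Backward shift of a time scale. -/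
noncomputable def tsRho (T : Set ℝ) (t : ℝ) : ℝ :=
  if ({s | s ∈ T ∧ s < t}).Nonempty then sSup {s | s ∈ T ∧ s < t} else sInf T

/-- `𝕋_κ` : the time scale with the left endpoint removed if it is finite and right-scattered. -/
noncomputable def tsKappa (T : Set ℝ) : Set ℝ :=
  if BddBelow T ∧ sInf T < tsSigma T (sInf T) then T \ {sInf T} else T

/-- Extension `p̄` of a function on `𝕋_κ` to all of `ℝ`. -/
noncomputable def extK (T : Set ℝ) (p : ℝ → ℂ) (t : ℝ) : ℂ :=
  if t ∈ tsKappa T then p t else p (tsSigma (tsKappa T) t)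

/-- Coercion of a real-valued coefficient to a complex-valued one. -/
def cR (f : ℝ → ℝ) : ℝ → ℂ := fun t => (f t : ℂ)

/-- `(u, u^[1])` is an integrated pair with density `h` against the measure `μ = dσ_κ`. -/
def IsPair (T : Set ℝ) (μ : Measure ℝ) (p : ℝ → ℂ) (u u1 h : ℝ → ℂ) : Prop :=
  ∀ c x : ℝ, c ≤ x →
    u x = u c + ∫ t in c..x, u1 t / extK T p t ∧
    u1 x = u1 c + ∫ t in Set.Ioc c x, h t ∂μ

/-- `(u, u^[1])` is a solution pair of `(ℓ - z) u = g`. -/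
def IsSLSol (T : Set ℝ) (μ : Measure ℝ) (p r q : ℝ → ℂ) (z : ℂ) (g : ℝ → ℂ)
    (u u1 : ℝ → ℂ) : Prop :=
  IsPair T μ p u u1 (fun t => (q t - z * r t) * u t - r t * g t)

/-- Wronskian of two pairs. -/
def Wr (u u1 v v1 : ℝ → ℂ) (x : ℝ) : ℂ := u x * v1 x - u1 x * v x

/-- The integrand `|u|² r` as an `ℝ≥0∞`-valued function. -/
noncomputable def sqWeight (r : ℝ → ℝ) (u : ℝ → ℂ) (t : ℝ) : ℝ≥0∞ :=
  ((‖u t‖₊ : ℝ≥0∞)) ^ 2 * ENNReal.ofReal (r t)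

/-- `u` lies in `L²` near the left endpoint `a`. -/
def L2NearLeft (T : Set ℝ) (μ : Measure ℝ) (r : ℝ → ℝ) (u : ℝ → ℂ) : Prop :=
  ∀ c ∈ tsKappa T, ∫⁻ t in {t | (∃ s ∈ T, s < t) ∧ t ≤ c} ∩ tsKappa T, sqWeight r u t ∂μ < ∞

/-- `u` lies in `L²` near the right endpoint `b`. -/
def L2NearRight (T : Set ℝ) (μ : Measure ℝ) (r : ℝ → ℝ) (u : ℝ → ℂ) : Prop :=
  ∀ c ∈ tsKappa T, ∫⁻ t in {t | c ≤ t ∧ ∃ s ∈ T, t < s} ∩ tsKappa T, sqWeight r u t ∂μ < ∞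

/-- `ℓ` is in the limit-circle case at the left endpoint. -/
def LimitCircleLeft (T : Set ℝ) (μ : Measure ℝ) (p r q : ℝ → ℝ) : Prop :=
  ∀ z : ℂ, ∀ u u1 : ℝ → ℂ, IsSLSol T μ (cR p) (cR r) (cR q) z 0 u u1 → L2NearLeft T μ r u

/-- `ℓ` is in the limit-point case at the left endpoint. -/
def LimitPointLeft (T : Set ℝ) (μ : Measure ℝ) (p r q : ℝ → ℝ) : Prop :=
  ∀ z : ℂ, ∃ u u1 : ℝ → ℂ, IsSLSol T μ (cR p) (cR r) (cR q) z 0 u u1 ∧ ¬ L2NearLeft T μ r u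

/-- `ℓ` is in the limit-circle case at the right endpoint. -/
def LimitCircleRight (T : Set ℝ) (μ : Measure ℝ) (p r q : ℝ → ℝ) : Prop :=
  ∀ z : ℂ, ∀ u u1 : ℝ → ℂ, IsSLSol T μ (cR p) (cR r) (cR q) z 0 u u1 → L2NearRight T μ r u

/-- `ℓ` is in the limit-point case at the right endpoint. -/
def LimitPointRight (T : Set ℝ) (μ : Measure ℝ) (p r q : ℝ → ℝ) : Prop :=
  ∀ z : ℂ, ∃ u u1 : ℝ → ℂ, IsSLSol T μ (cR p) (cR r) (cR q) z 0 u u1 ∧ ¬ L2NearRight T μ r u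

/-- The action `ℓ u = (-h + q u)/r` of the differential expression on a pair with density `h`. -/
noncomputable def ellApply (r q : ℝ → ℝ) (h u : ℝ → ℂ) (t : ℝ) : ℂ :=
  (-h t + (q t : ℂ) * u t) / (r t : ℂ)

/-- Membership in `L²(𝕋_κ; r dσ_κ)`. -/
def MemL2T (T : Set ℝ) (μ : Measure ℝ) (r : ℝ → ℝ) (u : ℝ → ℂ) : Prop :=
  ∫⁻ t in tsKappa T, sqWeight r u t ∂μ < ∞

/-- The pair `(u, u^[1])` with density `h` belongs to `D_ℓ²`. -/
def MemD2 (T : Set ℝ) (μ : Measure ℝ) (p r q : ℝ → ℝ) (u u1 h : ℝ → ℂ) : Prop :=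
  LocallyIntegrable h μ ∧ IsPair T μ (cR p) u u1 h ∧ MemL2T T μ r u ∧
    MemL2T T μ r (ellApply r q h u)

/-- The filter `x ↓ a`, `x ∈ 𝕋`. -/
noncomputable def leftLimFilter (T : Set ℝ) : Filter ℝ :=
  if BddBelow T then nhdsWithin (sInf T) T else Filter.atBot ⊓ Filter.principal T

/-- The filter `x ↑ b`, `x ∈ 𝕋`. -/
noncomputable def rightLimFilter (T : Set ℝ) : Filter ℝ :=
  if BddAbove T then nhdsWithin (sSup T) T else Filter.atTop ⊓ Filter.principal T

/-- The measure `r dσ_κ` on `𝕋_κ`, giving the Hilbert space `L²(𝕋_κ; r dσ_κ)`. -/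
noncomputable def wM (T : Set ℝ) (μ : Measure ℝ) (r : ℝ → ℝ) : Measure ℝ :=
  (μ.restrict (tsKappa T)).withDensity fun t => ENNReal.ofReal (r t)

/-!
A solution is a solution of the first-order system `du = v dt / p̄`, `dv = (q - z r) u dσ_κ`, whose
coefficients are locally integrable, with respect to a measure without atoms in the first equation.
Summing the iterates of the associated Volterra operator yields solutions `f₁`, `f₂` for `z₀` with
Wronskian one. A solution `u` for `z` is the combination of `f₁` and `f₂` whose coefficients are,
up to sign, the Wronskians of `u` with `f₂` and `f₁`; these have density `(z - z₀) r u fᵢ`. Near an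
endpoint where `r (|f₁| + |f₂|)²` has small integral their variation is absorbed by their size, so
they stay bounded, `u` is `O(|f₁| + |f₂|)`, and `r |u|²` is integrable. At a finite endpoint there
is nothing to prove, as solutions are continuous. Local integrability of `1 / p̄` holds because `p̄`
is `p` composed with a monotone map which pushes Lebesgue measure on the hull of `𝕋` forward to
`dρ`.
-/

section TriangleFubini

variable {𝕜 : Type*} [RCLike 𝕜] {l m : Measure ℝ} {f h : ℝ → 𝕜}

theorem integral_indicator_snd_le_fst_mul (s : ℝ) :
    ∫ t, {z : ℝ × ℝ | z.2 ≤ z.1}.indicator (fun z => f z.1 * h z.2) (s, t) ∂m =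
      f s * ∫ t in Iic s, h t ∂m := by
  rw [← integral_indicator measurableSet_Iic, ← integral_const_mul]
  refine integral_congr_ae (.of_forall fun t => ?_)
  by_cases hts : t ≤ s <;> simp [indicator, hts]

theorem measurableSet_snd_le_fst : MeasurableSet {z : ℝ × ℝ | z.2 ≤ z.1} :=
  measurableSet_le measurable_snd measurable_fst

theorem integrable_mul_setIntegral_Iic [SFinite m] (hf : Integrable f l) (hh : Integrable h m) :
    Integrable (fun s => f s * ∫ t in Iic s, h t ∂m) l := by
  have hprod := ((hf.mul_prod hh).indicator measurableSet_snd_le_fst).integral_prod_left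
  simpa only [integral_indicator_snd_le_fst_mul] using hprod

variable [SFinite l] [SFinite m]

theorem setIntegral_snd_le_fst_mul (hf : Integrable f l) (hh : Integrable h m) :
    ∫ z in {z : ℝ × ℝ | z.2 ≤ z.1}, f z.1 * h z.2 ∂l.prod m =
      ∫ s, f s * ∫ t in Iic s, h t ∂m ∂l := by
  rw [← integral_indicator measurableSet_snd_le_fst,
    integral_prod _ ((hf.mul_prod hh).indicator measurableSet_snd_le_fst)]
  simp only [integral_indicator_snd_le_fst_mul]

omit [SFinite l] [SFinite m] in
theorem compl_snd_le_fst_ae_eq [NullSingletonClass m] :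
    ({z : ℝ × ℝ | z.2 ≤ z.1}ᶜ : Set (ℝ × ℝ)) =ᵐ[l.prod m] Prod.swap ⁻¹' {z | z.2 ≤ z.1} := by
  have hdiag : l.prod m {z | z.1 = z.2} = 0 := by
    refine Measure.measure_prod_null_of_ae_null (measurableSet_eq_fun measurable_fst measurable_snd)
      (.of_forall fun s => ?_)
    simp [preimage]
  have hne : ∀ᵐ z ∂l.prod m, z.1 ≠ z.2 := measure_eq_zero_iff_ae_notMem.1 hdiag
  filter_upwards [hne] with z hz
  exact propext (not_le.trans ⟨le_of_lt, fun hle => lt_of_le_of_ne hle hz⟩)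

theorem integral_mul_integral_eq_add [NullSingletonClass m] (hf : Integrable f l)
    (hh : Integrable h m) :
    (∫ s, f s ∂l) * ∫ t, h t ∂m =
      (∫ s, f s * ∫ t in Iic s, h t ∂m ∂l) + ∫ t, h t * ∫ s in Iic t, f s ∂l ∂m := by
  have hswap : ∫ z in Prod.swap ⁻¹' {z : ℝ × ℝ | z.2 ≤ z.1}, f z.1 * h z.2 ∂l.prod m =
      ∫ z in {z : ℝ × ℝ | z.2 ≤ z.1}, h z.1 * f z.2 ∂m.prod l := by
    rw [← Measure.measurePreserving_swap.setIntegral_preimage_emb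
      MeasurableEquiv.prodComm.measurableEmbedding]
    simp only [← preimage_comp, Prod.swap_swap_eq, preimage_id, Prod.fst_swap, Prod.snd_swap,
      mul_comm]
  rw [← integral_prod_mul, ← integral_add_compl measurableSet_snd_le_fst (hf.mul_prod hh),
    setIntegral_congr_set compl_snd_le_fst_ae_eq, hswap, setIntegral_snd_le_fst_mul hf hh,
    setIntegral_snd_le_fst_mul hh hf]

end TriangleFubini

section Primitive

variable {E : Type*} [NormedAddCommGroup E] {μ : Measure ℝ} {f u : ℝ → E}

theorem integrableOn_Ioc_of_locallyIntegrable (hf : LocallyIntegrable f μ) (a b : ℝ) :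
    IntegrableOn f (Ioc a b) μ :=
  (hf.integrableOn_isCompact isCompact_Icc).mono_set Ioc_subset_Icc_self

theorem intervalIntegrable_of_locallyIntegrable (hf : LocallyIntegrable f μ) (a b : ℝ) :
    IntervalIntegrable f μ a b :=
  ⟨integrableOn_Ioc_of_locallyIntegrable hf a b, integrableOn_Ioc_of_locallyIntegrable hf b a⟩

theorem locallyIntegrable_of_forall_Ioc [IsLocallyFiniteMeasure μ]
    (hf : ∀ c d : ℝ, IntegrableOn f (Ioc c d) μ) : LocallyIntegrable f μ :=
  fun x => ⟨Ioc (x - 1) (x + 1), Ioc_mem_nhds (by linarith) (by linarith), hf _ _⟩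

variable [NormedSpace ℝ E]

/-- `u` is a primitive of `f` with respect to `μ`: its increments are the `μ`-integrals of `f` over
half-open intervals `(c, x]`. Integrability of `f` is not part of the notion, so `u` is constant
across an interval on which `f` fails to be integrable. -/
def IsPrimitive (μ : Measure ℝ) (f u : ℝ → E) : Prop :=
  ∀ c x, u x = u c + ∫ t in c..x, f t ∂μ

namespace IsPrimitive

theorem of_le (hu : ∀ c x, c ≤ x → u x = u c + ∫ t in c..x, f t ∂μ) : IsPrimitive μ f u := by
  intro c x
  rcases le_total c x with hcx | hxc
  · exact hu c x hcx
  · rw [intervalIntegral.integral_symm, ← sub_eq_add_neg, eq_sub_iff_add_eq]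
    exact (hu x c hxc).symm

theorem of_base (hf : LocallyIntegrable f μ) {a : ℝ}
    (hu : ∀ x, u x = u a + ∫ t in a..x, f t ∂μ) : IsPrimitive μ f u := by
  intro c x
  rw [hu x, hu c, add_assoc, intervalIntegral.integral_add_adjacent_intervals] <;>
    exact intervalIntegrable_of_locallyIntegrable hf _ _

theorem sub_eq (hu : IsPrimitive μ f u) (c x : ℝ) : u x - u c = ∫ t in c..x, f t ∂μ :=
  sub_eq_of_eq_add' (hu c x)

theorem setIntegral_Ioc (hu : IsPrimitive μ f u) {c x : ℝ} (hcx : c ≤ x) :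
    ∫ t in Ioc c x, f t ∂μ = u x - u c := by
  rw [hu.sub_eq c x, intervalIntegral.integral_of_le hcx]

theorem continuousOn_uIcc [NullSingletonClass μ] (hu : IsPrimitive μ f u) {y d : ℝ}
    (hf : IntervalIntegrable f μ y d) : ContinuousOn u (uIcc y d) :=
  (continuousOn_const.add
    (intervalIntegral.continuousOn_primitive_interval' hf left_mem_uIcc)).congr fun x _ => hu y x

theorem eq_of_not_intervalIntegrable (hu : IsPrimitive μ f u) {c x : ℝ}
    (hf : ¬IntervalIntegrable f μ c x) : u x = u c := by
  rw [hu c x, intervalIntegral.integral_undef hf, add_zero]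

/-- On either side of a point, `u` is the primitive of an integrable function on some interval
or is constant. -/
theorem continuous [NullSingletonClass μ] (hu : IsPrimitive μ f u) : Continuous u := by
  refine continuous_iff_continuousAt.2 fun y => continuousAt_iff_continuous_left_right.2 ⟨?_, ?_⟩
  · by_cases hint : ∃ d < y, IntervalIntegrable f μ y d
    · obtain ⟨d, hdy, hd⟩ := hint
      refine (hu.continuousOn_uIcc hd y left_mem_uIcc).mono_of_mem_nhdsWithin ?_
      rw [uIcc_of_ge hdy.le]
      exact Icc_mem_nhdsLE hdy
    · push Not at hint
      refine (continuousWithinAt_const (b := u y)).congr (fun d hd => ?_) rfl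
      rcases eq_or_lt_of_le (mem_Iic.1 hd) with rfl | hdy
      · rfl
      · exact hu.eq_of_not_intervalIntegrable (hint d hdy)
  · by_cases hint : ∃ d > y, IntervalIntegrable f μ y d
    · obtain ⟨d, hyd, hd⟩ := hint
      refine (hu.continuousOn_uIcc hd y left_mem_uIcc).mono_of_mem_nhdsWithin ?_
      rw [uIcc_of_le (le_of_lt hyd)]
      exact Icc_mem_nhdsGE hyd
    · push Not at hint
      refine (continuousWithinAt_const (b := u y)).congr (fun d hd => ?_) rfl
      rcases eq_or_lt_of_le (mem_Ici.1 hd) with rfl | hyd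
      · rfl
      · exact hu.eq_of_not_intervalIntegrable (hint d hyd)

theorem norm_sub_le (hu : IsPrimitive μ f u) (hf : LocallyIntegrable f μ) {c d x : ℝ}
    (hx : x ∈ Icc c d) : ‖u x - u c‖ ≤ ∫ t in Ioc c d, ‖f t‖ ∂μ := by
  have hint : IntegrableOn (fun t => ‖f t‖) (Ioc c d) μ :=
    (integrableOn_Ioc_of_locallyIntegrable hf c d).norm
  calc ‖u x - u c‖ = ‖∫ t in Ioc c x, f t ∂μ‖ := by rw [hu.setIntegral_Ioc hx.1]
    _ ≤ ∫ t in Ioc c x, ‖f t‖ ∂μ := norm_integral_le_integral_norm _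
    _ ≤ ∫ t in Ioc c d, ‖f t‖ ∂μ :=
      setIntegral_mono_set hint (.of_forall fun t => norm_nonneg _)
        (Ioc_subset_Ioc_right hx.2).eventuallyLE

theorem bddAbove_norm (hu : IsPrimitive μ f u) (hf : LocallyIntegrable f μ) (c d : ℝ) :
    BddAbove ((fun x => ‖u x‖) '' Icc c d) := by
  refine ⟨‖u c‖ + ∫ t in Ioc c d, ‖f t‖ ∂μ, ?_⟩
  rintro _ ⟨x, hx, rfl⟩
  exact (norm_le_insert' _ _).trans (add_le_add_right (hu.norm_sub_le hf hx) _)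

end IsPrimitive

section Product

variable {𝕜 : Type*} [RCLike 𝕜] {μ ν : Measure ℝ} {f h u w : ℝ → 𝕜}

namespace IsPrimitive

theorem restrict_Iic_eqOn (hw : IsPrimitive μ h w) (c d : ℝ) :
    EqOn (fun s => ∫ t in Iic s, h t ∂μ.restrict (Ioc c d)) (fun s => w s - w c) (Ioc c d) := by
  intro s hs
  have hset : Iic s ∩ Ioc c d = Ioc c s := by
    rw [inter_comm, Ioc_inter_Iic, inf_eq_right.2 hs.2]
  simp only [Measure.restrict_restrict measurableSet_Iic, hset, hw.setIntegral_Ioc hs.1.le]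

theorem integrableOn_mul_sub [SFinite μ] (hw : IsPrimitive μ h w) (hh : LocallyIntegrable h μ)
    (hf : LocallyIntegrable f ν) (c d : ℝ) :
    IntegrableOn (fun s => f s * (w s - w c)) (Ioc c d) ν :=
  IntegrableOn.congr_fun
    (integrable_mul_setIntegral_Iic (integrableOn_Ioc_of_locallyIntegrable hf c d)
      (integrableOn_Ioc_of_locallyIntegrable hh c d))
    (fun s hs => congrArg (f s * ·) (hw.restrict_Iic_eqOn c d hs)) measurableSet_Ioc

theorem locallyIntegrable_mul [SFinite μ] [IsLocallyFiniteMeasure ν] (hw : IsPrimitive μ h w)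
    (hh : LocallyIntegrable h μ) (hf : LocallyIntegrable f ν) :
    LocallyIntegrable (fun s => f s * w s) ν := by
  refine locallyIntegrable_of_forall_Ioc fun c d => ?_
  refine ((hw.integrableOn_mul_sub hh hf c d).add
    ((integrableOn_Ioc_of_locallyIntegrable hf c d).mul_const (w c))).congr
    (.of_forall fun s => ?_)
  simp only [Pi.add_apply, mul_sub, sub_add_cancel]

theorem setIntegral_mul_sub [SFinite μ] [IsLocallyFiniteMeasure ν] (hw : IsPrimitive μ h w)
    (hh : LocallyIntegrable h μ) (hf : LocallyIntegrable f ν) (c d : ℝ) :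
    ∫ s in Ioc c d, f s * (w s - w c) ∂ν =
      (∫ s in Ioc c d, f s * w s ∂ν) - (∫ s in Ioc c d, f s ∂ν) * w c := by
  simp only [mul_sub]
  rw [integral_sub (integrableOn_Ioc_of_locallyIntegrable (hw.locallyIntegrable_mul hh hf) c d)
    ((integrableOn_Ioc_of_locallyIntegrable hf c d).mul_const _), integral_mul_const]

variable [IsLocallyFiniteMeasure μ] [IsLocallyFiniteMeasure ν] [NullSingletonClass ν]

theorem integration_by_parts_of_le (hu : IsPrimitive ν f u) (hf : LocallyIntegrable f ν)
    (hw : IsPrimitive μ h w) (hh : LocallyIntegrable h μ) {c d : ℝ} (hcd : c ≤ d) :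
    u d * w d - u c * w c = (∫ t in Ioc c d, h t * u t ∂μ) + ∫ t in Ioc c d, f t * w t ∂ν := by
  have hfubini := integral_mul_integral_eq_add (integrableOn_Ioc_of_locallyIntegrable hh c d)
    (integrableOn_Ioc_of_locallyIntegrable hf c d)
  rw [setIntegral_congr_fun measurableSet_Ioc
      (fun s hs => congrArg (h s * ·) (hu.restrict_Iic_eqOn c d hs)),
    setIntegral_congr_fun measurableSet_Ioc
      (fun s hs => congrArg (f s * ·) (hw.restrict_Iic_eqOn c d hs)),
    hu.setIntegral_mul_sub hf hh, hw.setIntegral_mul_sub hh hf,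
    hu.setIntegral_Ioc hcd, hw.setIntegral_Ioc hcd] at hfubini
  linear_combination hfubini

theorem integration_by_parts (hu : IsPrimitive ν f u) (hf : LocallyIntegrable f ν)
    (hw : IsPrimitive μ h w) (hh : LocallyIntegrable h μ) (c d : ℝ) :
    u d * w d - u c * w c = (∫ t in c..d, h t * u t ∂μ) + ∫ t in c..d, f t * w t ∂ν := by
  rcases le_total c d with hcd | hdc
  · simpa only [intervalIntegral.integral_of_le hcd] using
      hu.integration_by_parts_of_le hf hw hh hcd
  · simp only [intervalIntegral.integral_of_ge hdc]
    linear_combination -hu.integration_by_parts_of_le hf hw hh hdc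

end IsPrimitive

end Product

end Primitive

theorem abs_eq_sign_mul_of_monotone {F : ℝ → ℝ} (hF : Monotone F) {a : ℝ} (ha : F a = 0) (x : ℝ) :
    ∃ ε : ℝ, |ε| = 1 ∧ ∀ t ∈ uIcc a x, |F t| = ε * F t := by
  rcases le_total a x with hax | hxa
  · refine ⟨1, abs_one, fun t ht => ?_⟩
    rw [uIcc_of_le hax] at ht
    rw [one_mul, abs_of_nonneg (ha ▸ hF ht.1)]
  · refine ⟨-1, by simp, fun t ht => ?_⟩
    rw [uIcc_of_ge hxa] at ht
    rw [neg_one_mul, abs_of_nonpos (ha ▸ hF ht.2)]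

theorem abs_le_abs_of_monotone {F : ℝ → ℝ} (hF : Monotone F) {a t x : ℝ} (ha : F a = 0)
    (ht : t ∈ uIcc a x) : |F t| ≤ |F x| := by
  rcases mem_uIcc.1 ht with ⟨hat, htx⟩ | ⟨hxt, hta⟩
  · exact abs_le_abs_of_nonneg (ha ▸ hF hat) (hF htx)
  · exact abs_le_abs_of_nonpos (ha ▸ hF hta) (hF hxt)

section Power
variable {ν : Measure ℝ} [IsLocallyFiniteMeasure ν] [NullSingletonClass ν] {φ F : ℝ → ℝ}

namespace IsPrimitive

theorem pow_succ (hF : IsPrimitive ν φ F) (hφ : LocallyIntegrable φ ν) (n : ℕ) :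
    LocallyIntegrable (fun t => (n + 1) * F t ^ n * φ t) ν ∧
      IsPrimitive ν (fun t => (n + 1) * F t ^ n * φ t) (fun t => F t ^ (n + 1)) := by
  induction n with
  | zero => simpa using ⟨hφ, hF⟩
  | succ n ih =>
    obtain ⟨hint, hprim⟩ := ih
    have h₁ := hF.locallyIntegrable_mul hφ hint
    have h₂ := hprim.locallyIntegrable_mul hint hφ
    have hsum : (fun t => ((n + 1 : ℕ) + 1) * F t ^ (n + 1) * φ t) =
        fun t => ((n + 1) * F t ^ n * φ t) * F t + φ t * F t ^ (n + 1) := by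
      ext t; push_cast; ring
    rw [hsum]
    refine ⟨h₁.add h₂, fun c x => ?_⟩
    have hparts := hF.integration_by_parts hφ hprim hint c x
    rw [intervalIntegral.integral_add (intervalIntegrable_of_locallyIntegrable h₁ _ _)
      (intervalIntegrable_of_locallyIntegrable h₂ _ _)]
    linear_combination hparts

theorem integral_pow_mul (hF : IsPrimitive ν φ F) (hφ : LocallyIntegrable φ ν) {a : ℝ}
    (ha : F a = 0) (n : ℕ) (x : ℝ) :
    ∫ t in a..x, F t ^ n * φ t ∂ν = F x ^ (n + 1) / (n + 1) := by
  have hpow := (hF.pow_succ hφ n).2 a x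
  simp only [ha, zero_pow n.succ_ne_zero, zero_add, mul_assoc,
    intervalIntegral.integral_const_mul] at hpow
  rw [hpow, mul_div_cancel_left₀ _ n.cast_add_one_ne_zero]

omit [IsLocallyFiniteMeasure ν] [NullSingletonClass ν] in
theorem monotone (hF : IsPrimitive ν φ F) (hφ : 0 ≤ φ) : Monotone F := fun c x hcx => by
  rw [hF c x]
  exact le_add_of_nonneg_right (intervalIntegral.integral_nonneg_of_forall hcx hφ)

theorem abs_integral_abs_pow_mul (hF : IsPrimitive ν φ F) (hφ : LocallyIntegrable φ ν)
    (hφ0 : 0 ≤ φ) {a : ℝ} (ha : F a = 0) (n : ℕ) (x : ℝ) :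
    |∫ t in a..x, |F t| ^ n * φ t ∂ν| = |F x| ^ (n + 1) / (n + 1) := by
  obtain ⟨ε, hε, hsign⟩ := abs_eq_sign_mul_of_monotone (hF.monotone hφ0) ha x
  have hcongr : ∫ t in a..x, |F t| ^ n * φ t ∂ν = ε ^ n * ∫ t in a..x, F t ^ n * φ t ∂ν := by
    rw [← intervalIntegral.integral_const_mul]
    refine intervalIntegral.integral_congr fun t ht => ?_
    simp only [hsign t ht, mul_pow, mul_assoc]
  rw [hcongr, hF.integral_pow_mul hφ ha, abs_mul, abs_pow, hε, one_pow, one_mul, abs_div, abs_pow,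
    abs_of_nonneg (n.cast_add_one_pos (α := ℝ)).le]

end IsPrimitive

end Power

section Volterra

variable {𝕜 : Type*} [RCLike 𝕜] {ν μ : Measure ℝ} {g k u : ℝ → 𝕜} {a c d x : ℝ}

theorem locallyIntegrable_mul_of_continuous (hk : LocallyIntegrable k μ) (hu : Continuous u) :
    LocallyIntegrable (fun t => k t * u t) μ := by
  simpa only [smul_eq_mul, mul_comm] using hk.continuous_smul hu

theorem locallyIntegrable_norm (hk : LocallyIntegrable k μ) :
    LocallyIntegrable (fun t => ‖k t‖) μ :=
  fun x => (hk x).norm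

theorem isPrimitive_integral (hk : LocallyIntegrable k μ) (a : ℝ) :
    IsPrimitive μ k (fun x => ∫ t in a..x, k t ∂μ) :=
  .of_base hk (a := a) fun x => by rw [intervalIntegral.integral_same, zero_add]

/-- The Volterra operator `K` for which the system `du = g v dν`, `dv = k u dμ` takes the form
`u = u₀ + K u`. -/
noncomputable def volterraOp (ν μ : Measure ℝ) (g k : ℝ → 𝕜) (a : ℝ) (u : ℝ → 𝕜) (x : ℝ) : 𝕜 :=
  ∫ s in a..x, g s * ∫ t in a..s, k t * u t ∂μ ∂ν

theorem norm_integral_mul_le (hk : LocallyIntegrable k μ) (ha : a ∈ Icc c d) (hx : x ∈ Icc c d)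
    {M : ℝ} (hM : 0 ≤ M) (hu : ∀ t ∈ uIcc a x, ‖u t‖ ≤ M) :
    ‖∫ t in a..x, k t * u t ∂μ‖ ≤ (∫ t in Ioc c d, ‖k t‖ ∂μ) * M := by
  have hkcd : IntegrableOn (fun t => ‖k t‖) (Ioc c d) μ :=
    (integrableOn_Ioc_of_locallyIntegrable hk c d).norm
  have hsub : uIoc a x ⊆ Ioc c d := Ioc_subset_Ioc (le_inf ha.1 hx.1) (sup_le ha.2 hx.2)
  calc ‖∫ t in a..x, k t * u t ∂μ‖ = ‖∫ t in uIoc a x, k t * u t ∂μ‖ :=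
        intervalIntegral.norm_intervalIntegral_eq ..
    _ ≤ ∫ t in uIoc a x, ‖k t‖ * M ∂μ := by
        refine norm_integral_le_of_norm_le ((hkcd.mono_set hsub).mul_const M)
          ((ae_restrict_iff' measurableSet_uIoc).2 (.of_forall fun t ht => ?_))
        rw [norm_mul]
        exact mul_le_mul_of_nonneg_left (hu t (uIoc_subset_uIcc ht)) (norm_nonneg _)
    _ = (∫ t in uIoc a x, ‖k t‖ ∂μ) * M := integral_mul_const _ _
    _ ≤ (∫ t in Ioc c d, ‖k t‖ ∂μ) * M :=
        mul_le_mul_of_nonneg_right (setIntegral_mono_set hkcd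
          (.of_forall fun t => norm_nonneg _) hsub.eventuallyLE) hM

theorem hasSum_integral_mul (hk : LocallyIntegrable k μ) {G : ℕ → ℝ → 𝕜} {M : ℕ → ℝ}
    (hkG : ∀ n, LocallyIntegrable (fun t => k t * G n t) μ) (hM : Summable M)
    (hGM : ∀ n, ∀ t ∈ uIcc a x, ‖G n t‖ ≤ M n) (hu : ∀ t ∈ uIcc a x, HasSum (G · t) (u t)) :
    HasSum (fun n => ∫ t in a..x, k t * G n t ∂μ) (∫ t in a..x, k t * u t ∂μ) := by
  refine intervalIntegral.hasSum_integral_of_dominated_convergence (fun n t => ‖k t‖ * M n)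
    (fun n => ((intervalIntegrable_of_locallyIntegrable (hkG n) a x).def').aestronglyMeasurable)
    (fun n => .of_forall fun t ht => ?_) (.of_forall fun t _ => hM.mul_left _) ?_
    (.of_forall fun t ht => (hu t (uIoc_subset_uIcc ht)).mul_left _)
  · rw [norm_mul]
    exact mul_le_mul_of_nonneg_left (hGM n t (uIoc_subset_uIcc ht)) (norm_nonneg _)
  · simp only [tsum_mul_left]
    exact (intervalIntegrable_of_locallyIntegrable hk a x).norm.mul_const _

theorem locallyIntegrable_mul_integral [IsLocallyFiniteMeasure ν] [IsLocallyFiniteMeasure μ]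
    (hg : LocallyIntegrable g ν) (hk : LocallyIntegrable k μ) (hu : Continuous u) (a : ℝ) :
    LocallyIntegrable (fun s => g s * ∫ t in a..s, k t * u t ∂μ) ν :=
  (isPrimitive_integral (locallyIntegrable_mul_of_continuous hk hu) a).locallyIntegrable_mul
    (locallyIntegrable_mul_of_continuous hk hu) hg

variable [IsLocallyFiniteMeasure ν] [NullSingletonClass ν]

theorem norm_volterraOp_le (hg : LocallyIntegrable g ν) (hk : LocallyIntegrable k μ)
    (ha : a ∈ Icc c d) {F : ℝ → ℝ} (hFa : F a = 0)
    (hF : IsPrimitive ν (fun s => (∫ t in Ioc c d, ‖k t‖ ∂μ) * ‖g s‖) F) {D : ℝ} {n : ℕ}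
    (hD : 0 ≤ D) (hu : ∀ t ∈ Icc c d, ‖u t‖ ≤ D * |F t| ^ n) (hx : x ∈ Icc c d) :
    ‖volterraOp ν μ g k a u x‖ ≤ D * (|F x| ^ (n + 1) / (n + 1)) := by
  set φ : ℝ → ℝ := fun s => (∫ t in Ioc c d, ‖k t‖ ∂μ) * ‖g s‖
  have hφ : LocallyIntegrable φ ν := (locallyIntegrable_norm hg).smul (_ : ℝ)
  have hφ0 : 0 ≤ φ := fun s =>
    mul_nonneg (integral_nonneg fun t => norm_nonneg _) (norm_nonneg _)
  have hinner : ∀ s ∈ uIoc a x,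
      ‖g s * ∫ t in a..s, k t * u t ∂μ‖ ≤ D * (|F s| ^ n * φ s) := by
    intro s hs
    have hscd : s ∈ Icc c d := uIcc_subset_Icc ha hx (uIoc_subset_uIcc hs)
    have hle : ∀ t ∈ uIcc a s, ‖u t‖ ≤ D * |F s| ^ n := fun t ht =>
      (hu t (uIcc_subset_Icc ha hscd ht)).trans <| by
        gcongr _ * ?_ ^ _
        exact abs_le_abs_of_monotone (hF.monotone hφ0) hFa ht
    have hk_le := norm_integral_mul_le hk ha hscd (by positivity) hle
    rw [norm_mul]
    calc ‖g s‖ * ‖∫ t in a..s, k t * u t ∂μ‖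
        ≤ ‖g s‖ * ((∫ t in Ioc c d, ‖k t‖ ∂μ) * (D * |F s| ^ n)) := by gcongr
      _ = D * (|F s| ^ n * φ s) := by ring
  have hint : IntervalIntegrable (fun s => D * (|F s| ^ n * φ s)) ν a x :=
    (intervalIntegrable_of_locallyIntegrable
      (hφ.continuous_smul (hF.continuous.abs.pow n)) a x).const_mul D
  calc ‖volterraOp ν μ g k a u x‖ ≤ |∫ s in a..x, D * (|F s| ^ n * φ s) ∂ν| :=
        intervalIntegral.norm_integral_le_abs_of_norm_le
          ((ae_restrict_iff' measurableSet_uIoc).2 (.of_forall hinner)) hint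
    _ = D * (|F x| ^ (n + 1) / (n + 1)) := by
        rw [intervalIntegral.integral_const_mul, abs_mul, abs_of_nonneg hD,
          hF.abs_integral_abs_pow_mul hφ hφ0 hFa]

theorem norm_iterate_volterraOp_le (hg : LocallyIntegrable g ν) (hk : LocallyIntegrable k μ)
    (ha : a ∈ Icc c d) {F : ℝ → ℝ} (hFa : F a = 0)
    (hF : IsPrimitive ν (fun s => (∫ t in Ioc c d, ‖k t‖ ∂μ) * ‖g s‖) F) {D : ℝ}
    (hu : ∀ t ∈ Icc c d, ‖u t‖ ≤ D) (n : ℕ) (hx : x ∈ Icc c d) :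
    ‖(volterraOp ν μ g k a)^[n] u x‖ ≤ D * |F x| ^ n / n.factorial := by
  have hD : 0 ≤ D := (norm_nonneg _).trans (hu a ha)
  induction n generalizing x with
  | zero => simpa using hu x hx
  | succ n ih =>
    rw [Function.iterate_succ_apply']
    refine (norm_volterraOp_le (D := D / n.factorial) (n := n) hg hk ha hFa hF (by positivity)
      (fun t ht => (ih ht).trans_eq (by ring)) hx).trans_eq ?_
    rw [Nat.factorial_succ]
    push_cast
    field_simp

theorem exists_summable_norm_iterate_volterraOp_le (hg : LocallyIntegrable g ν)
    (hk : LocallyIntegrable k μ) (ha : a ∈ Icc c d) (hu : Continuous u) :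
    ∃ M : ℕ → ℝ, Summable M ∧
      ∀ n, ∀ x ∈ Icc c d, ‖(volterraOp ν μ g k a)^[n] u x‖ ≤ M n := by
  have hφ : LocallyIntegrable (fun s => (∫ t in Ioc c d, ‖k t‖ ∂μ) * ‖g s‖) ν :=
    (locallyIntegrable_norm hg).smul (_ : ℝ)
  have hF := isPrimitive_integral hφ a
  set F : ℝ → ℝ := fun x => ∫ s in a..x, (∫ t in Ioc c d, ‖k t‖ ∂μ) * ‖g s‖ ∂ν
  have hFa : F a = 0 := intervalIntegral.integral_same
  obtain ⟨D, hD⟩ := isCompact_Icc.exists_bound_of_continuousOn (hu.continuousOn (s := Icc c d))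
  obtain ⟨R, hR⟩ :=
    isCompact_Icc.exists_bound_of_continuousOn (hF.continuous.continuousOn (s := Icc c d))
  have hD0 : 0 ≤ D := (norm_nonneg _).trans (hD a ha)
  refine ⟨fun n => D * (R ^ n / n.factorial), (Real.summable_pow_div_factorial R).mul_left D,
    fun n x hx => (norm_iterate_volterraOp_le hg hk ha hFa hF hD n hx).trans ?_⟩
  rw [mul_div_assoc]
  exact mul_le_mul_of_nonneg_left (div_le_div_of_nonneg_right
    (pow_le_pow_left₀ (abs_nonneg _) (hR x hx) n) n.factorial.cast_nonneg) hD0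

variable [IsLocallyFiniteMeasure μ]

theorem continuous_volterraOp (hg : LocallyIntegrable g ν) (hk : LocallyIntegrable k μ)
    (hu : Continuous u) (a : ℝ) : Continuous (volterraOp ν μ g k a u) :=
  (isPrimitive_integral (locallyIntegrable_mul_integral hg hk hu a) a).continuous

theorem continuous_iterate_volterraOp (hg : LocallyIntegrable g ν) (hk : LocallyIntegrable k μ)
    (hu : Continuous u) (a : ℝ) (n : ℕ) : Continuous ((volterraOp ν μ g k a)^[n] u) := by
  induction n with
  | zero => exact hu
  | succ n ih =>
    rw [Function.iterate_succ_apply']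
    exact continuous_volterraOp hg hk ih a

theorem continuous_tsum_iterate_volterraOp (hg : LocallyIntegrable g ν)
    (hk : LocallyIntegrable k μ) (hu : Continuous u) (a : ℝ) :
    Continuous fun x => ∑' n, (volterraOp ν μ g k a)^[n] u x := by
  refine continuous_iff_continuousAt.2 fun x => ?_
  have ha : a ∈ Icc (min a x - 1) (max a x + 1) :=
    ⟨by linarith [min_le_left a x], by linarith [le_max_left a x]⟩
  obtain ⟨M, hM, hle⟩ := exists_summable_norm_iterate_volterraOp_le hg hk ha hu
  refine (continuousOn_tsum
    (fun n => (continuous_iterate_volterraOp hg hk hu a n).continuousOn) hM hle).continuousAt ?_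
  exact Icc_mem_nhds (by linarith [min_le_right a x]) (by linarith [le_max_right a x])

theorem hasSum_volterraOp_iterate (hg : LocallyIntegrable g ν) (hk : LocallyIntegrable k μ)
    (hu : Continuous u) (a x : ℝ) :
    HasSum (fun n => (volterraOp ν μ g k a)^[n + 1] u x)
      (volterraOp ν μ g k a (fun t => ∑' n, (volterraOp ν μ g k a)^[n] u t) x) := by
  obtain ⟨M, hM, hle⟩ :=
    exists_summable_norm_iterate_volterraOp_le hg hk (left_mem_uIcc : a ∈ uIcc a x) hu
  have hcont := continuous_iterate_volterraOp hg hk hu a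
  have hM0 : ∀ n, 0 ≤ M n := fun n => (norm_nonneg _).trans (hle n a left_mem_uIcc)
  have hle' : ∀ n, ∀ s ∈ uIcc a x, ∀ t ∈ uIcc a s, ‖(volterraOp ν μ g k a)^[n] u t‖ ≤ M n :=
    fun n s hs t ht => hle n t (uIcc_subset_uIcc_left hs ht)
  have hinner : ∀ s ∈ uIcc a x,
      HasSum (fun n => ∫ t in a..s, k t * (volterraOp ν μ g k a)^[n] u t ∂μ)
        (∫ t in a..s, k t * ∑' n, (volterraOp ν μ g k a)^[n] u t ∂μ) := fun s hs =>
    hasSum_integral_mul hk (fun n => locallyIntegrable_mul_of_continuous hk (hcont n)) hM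
      (fun n => hle' n s hs) fun t ht => (hM.of_norm_bounded fun n => hle' n s hs t ht).hasSum
  simp only [Function.iterate_succ_apply']
  exact hasSum_integral_mul hg (fun n => locallyIntegrable_mul_integral hg hk (hcont n) a)
    (hM.mul_left (∫ t in Ioc (a ⊓ x) (a ⊔ x), ‖k t‖ ∂μ))
    (fun n s hs => norm_integral_mul_le hk left_mem_uIcc hs (hM0 n) (hle' n s hs)) hinner

theorem exists_continuous_eq_add_volterraOp (hg : LocallyIntegrable g ν)
    (hk : LocallyIntegrable k μ) (hu : Continuous u) (a : ℝ) :
    ∃ w : ℝ → 𝕜, Continuous w ∧ ∀ x, w x = u x + volterraOp ν μ g k a w x := by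
  refine ⟨fun x => ∑' n, (volterraOp ν μ g k a)^[n] u x,
    continuous_tsum_iterate_volterraOp hg hk hu a, fun x => ?_⟩
  have hsum := hasSum_volterraOp_iterate hg hk hu a x
  have hsummable : Summable fun n => (volterraOp ν μ g k a)^[n] u x :=
    (summable_nat_add_iff (f := fun n => (volterraOp ν μ g k a)^[n] u x) 1).1 hsum.summable
  exact hsummable.tsum_eq_zero_add.trans (congrArg (u x + ·) hsum.tsum_eq)

end Volterra

section System

variable {𝕜 : Type*} [RCLike 𝕜]

/-- `(u, v)` solves the linear system `du = g v dν`, `dv = k u dμ`. -/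
structure IsSystemSol (ν μ : Measure ℝ) (g k u v : ℝ → 𝕜) : Prop where
  fst : IsPrimitive ν (fun t => g t * v t) u
  snd : IsPrimitive μ (fun t => k t * u t) v

namespace IsSystemSol

variable {ν μ : Measure ℝ} [NullSingletonClass ν] {g k u v : ℝ → 𝕜}

theorem continuous_fst (h : IsSystemSol ν μ g k u v) : Continuous u :=
  h.fst.continuous

theorem locallyIntegrable_mul_fst (h : IsSystemSol ν μ g k u v) (hk : LocallyIntegrable k μ) :
    LocallyIntegrable (fun t => k t * u t) μ :=
  locallyIntegrable_mul_of_continuous hk h.continuous_fst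

theorem locallyIntegrable_mul_snd [SFinite μ] [IsLocallyFiniteMeasure ν]
    (h : IsSystemSol ν μ g k u v) (hg : LocallyIntegrable g ν) (hk : LocallyIntegrable k μ) :
    LocallyIntegrable (fun t => g t * v t) ν :=
  h.snd.locallyIntegrable_mul (h.locallyIntegrable_mul_fst hk) hg

variable [IsLocallyFiniteMeasure ν] [IsLocallyFiniteMeasure μ]

theorem exists_eq (hg : LocallyIntegrable g ν) (hk : LocallyIntegrable k μ) (a : ℝ) (A B : 𝕜) :
    ∃ u v, IsSystemSol ν μ g k u v ∧ u a = A ∧ v a = B := by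
  have hgB : LocallyIntegrable (fun t => g t * B) ν :=
    locallyIntegrable_mul_of_continuous hg continuous_const
  obtain ⟨u, hu, hfix⟩ := exists_continuous_eq_add_volterraOp hg hk
    (continuous_const.add (isPrimitive_integral hgB a).continuous :
      Continuous fun x => A + ∫ t in a..x, g t * B ∂ν) a
  have hgK := locallyIntegrable_mul_integral hg hk hu a
  set v : ℝ → 𝕜 := fun x => B + ∫ t in a..x, k t * u t ∂μ
  have hgv : (fun t => g t * v t) = fun t => g t * B + g t * ∫ s in a..t, k s * u s ∂μ := by
    simp only [v, mul_add]
  have hu_eq : ∀ x, u x = A + ∫ t in a..x, g t * v t ∂ν := fun x => by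
    rw [hfix x, volterraOp, Pi.add_apply, hgv, intervalIntegral.integral_add
      (intervalIntegrable_of_locallyIntegrable hgB a x)
      (intervalIntegrable_of_locallyIntegrable hgK a x), add_assoc]
  have hua : u a = A := by rw [hu_eq a, intervalIntegral.integral_same, add_zero]
  have hva : v a = B := by simp only [v, intervalIntegral.integral_same, add_zero]
  exact ⟨u, v, ⟨.of_base (hgv ▸ hgB.add hgK) fun x => by rw [hua, hu_eq x],
    .of_base (locallyIntegrable_mul_of_continuous hk hu) fun x => by rw [hva]⟩, hua, hva⟩

end IsSystemSol

end System

section Wronskian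

variable {ν μ : Measure ℝ} [NullSingletonClass ν] [IsLocallyFiniteMeasure ν]
  [IsLocallyFiniteMeasure μ] {g k k' u v f f₁ p p₁ : ℝ → ℂ}

namespace IsSystemSol

theorem isPrimitive_Wr (hu : IsSystemSol ν μ g k u v) (hf : IsSystemSol ν μ g k' f f₁)
    (hg : LocallyIntegrable g ν) (hk : LocallyIntegrable k μ) (hk' : LocallyIntegrable k' μ) :
    IsPrimitive μ (fun t => (k' t - k t) * (u t * f t)) (Wr u v f f₁) := by
  intro c x
  have h₁ := hu.fst.integration_by_parts (hu.locallyIntegrable_mul_snd hg hk) hf.snd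
    (hf.locallyIntegrable_mul_fst hk') c x
  have h₂ := hf.fst.integration_by_parts (hf.locallyIntegrable_mul_snd hg hk') hu.snd
    (hu.locallyIntegrable_mul_fst hk) c x
  have hsplit : ∫ t in c..x, (k' t - k t) * (u t * f t) ∂μ =
      (∫ t in c..x, k' t * f t * u t ∂μ) - ∫ t in c..x, k t * u t * f t ∂μ := by
    rw [← intervalIntegral.integral_sub]
    · congr 1 with t
      ring
    · exact intervalIntegrable_of_locallyIntegrable (locallyIntegrable_mul_of_continuous
        (hf.locallyIntegrable_mul_fst hk') hu.continuous_fst) c x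
    · exact intervalIntegrable_of_locallyIntegrable (locallyIntegrable_mul_of_continuous
        (hu.locallyIntegrable_mul_fst hk) hf.continuous_fst) c x
  have hsymm : ∫ t in c..x, g t * f₁ t * v t ∂ν = ∫ t in c..x, g t * v t * f₁ t ∂ν := by
    simp only [mul_right_comm]
  rw [hsymm] at h₂
  rw [hsplit]
  simp only [Wr]
  linear_combination h₁ - h₂

theorem Wr_eq (hf : IsSystemSol ν μ g k f f₁) (hp : IsSystemSol ν μ g k p p₁)
    (hg : LocallyIntegrable g ν) (hk : LocallyIntegrable k μ) (x y : ℝ) :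
    Wr f f₁ p p₁ x = Wr f f₁ p p₁ y := by
  simpa only [sub_self, zero_mul, intervalIntegral.integral_zero, add_zero] using
    hf.isPrimitive_Wr hp hg hk hk y x

end IsSystemSol

/-- A fundamental system of solutions, normalised to have Wronskian one. -/
structure IsFundamentalPair (ν μ : Measure ℝ) (g k f f₁ p p₁ : ℝ → ℂ) : Prop where
  fst : IsSystemSol ν μ g k f f₁
  snd : IsSystemSol ν μ g k p p₁
  Wr_eq_one : ∀ x, Wr f f₁ p p₁ x = 1

theorem exists_isFundamentalPair (hg : LocallyIntegrable g ν) (hk : LocallyIntegrable k μ) :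
    ∃ f f₁ p p₁, IsFundamentalPair ν μ g k f f₁ p p₁ := by
  obtain ⟨f, f₁, hf, hf0, hf₁0⟩ := IsSystemSol.exists_eq hg hk 0 1 0
  obtain ⟨p, p₁, hp, hp0, hp₁0⟩ := IsSystemSol.exists_eq hg hk 0 0 1
  refine ⟨f, f₁, p, p₁, hf, hp, fun x => ?_⟩
  rw [hf.Wr_eq hp hg hk x 0, Wr, hf0, hf₁0, hp0, hp₁0, one_mul, zero_mul, sub_zero]

theorem eq_Wr_mul_sub_Wr_mul {x : ℝ} (hfp : Wr f f₁ p p₁ x = 1) :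
    u x = Wr u v p p₁ x * f x - Wr u v f f₁ x * p x := by
  simp only [Wr] at hfp ⊢
  linear_combination -u x * hfp

theorem norm_le_of_Wr_eq_one {x : ℝ} (hfp : Wr f f₁ p p₁ x = 1) :
    ‖u x‖ ≤ (‖Wr u v f f₁ x‖ + ‖Wr u v p p₁ x‖) * (‖f x‖ + ‖p x‖) := by
  have hsub := norm_sub_le (Wr u v p p₁ x * f x) (Wr u v f f₁ x * p x)
  rw [← eq_Wr_mul_sub_Wr_mul hfp, norm_mul, norm_mul] at hsub
  refine hsub.trans ?_
  nlinarith [mul_nonneg (norm_nonneg (Wr u v f f₁ x)) (norm_nonneg (f x)),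
    mul_nonneg (norm_nonneg (Wr u v p p₁ x)) (norm_nonneg (p x))]

end Wronskian

theorem le_two_mul_of_forall_le_add_half {α : Type*} {N : α → ℝ} {s : Set α} {b : ℝ}
    (hN : BddAbove (N '' s)) (h : ∀ S, (∀ x ∈ s, N x ≤ S) → ∀ x ∈ s, N x ≤ b + S / 2) :
    ∀ x ∈ s, N x ≤ 2 * b := by
  intro x hx
  have hle : ∀ y ∈ s, N y ≤ sSup (N '' s) := fun y hy => le_csSup hN (mem_image_of_mem N hy)
  have hsup : sSup (N '' s) ≤ b + sSup (N '' s) / 2 :=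
    csSup_le ⟨N x, mem_image_of_mem N hx⟩ (forall_mem_image.2 (h _ hle))
  linarith [hle x hx]

section Comparison

theorem norm_intervalIntegral_le_setIntegral_uIoc {E : Type*} [NormedAddCommGroup E]
    [NormedSpace ℝ E] {μ : Measure ℝ} {F : ℝ → E} {W : ℝ → ℝ} {c x y : ℝ} (hx : x ∈ uIcc c y)
    (hW : IntegrableOn W (uIoc c y) μ) (hF : ∀ t ∈ uIcc c y, ‖F t‖ ≤ W t) :
    ‖∫ t in c..x, F t ∂μ‖ ≤ ∫ t in uIoc c y, W t ∂μ := by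
  have hsub : uIoc c x ⊆ uIoc c y :=
    uIoc_subset_uIoc_of_uIcc_subset_uIcc (uIcc_subset_uIcc_left hx)
  calc ‖∫ t in c..x, F t ∂μ‖ = ‖∫ t in uIoc c x, F t ∂μ‖ :=
        intervalIntegral.norm_intervalIntegral_eq ..
    _ ≤ ∫ t in uIoc c x, W t ∂μ :=
        norm_integral_le_of_norm_le (hW.mono_set hsub) ((ae_restrict_iff' measurableSet_uIoc).2
          (.of_forall fun t ht => hF t (uIoc_subset_uIcc (hsub ht))))
    _ ≤ ∫ t in uIoc c y, W t ∂μ :=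
        setIntegral_mono_set hW ((ae_restrict_iff' measurableSet_uIoc).2
          (.of_forall fun t ht => (norm_nonneg _).trans (hF t (uIoc_subset_uIcc ht))))
          hsub.eventuallyLE

theorem locallyIntegrable_norm_sub_mul_sq {μ : Measure ℝ} {k k' : ℝ → ℂ} {w : ℝ → ℝ}
    (hk : LocallyIntegrable k μ) (hk' : LocallyIntegrable k' μ) (hw : Continuous w) :
    LocallyIntegrable (fun t => ‖k t - k' t‖ * w t ^ 2) μ :=
  locallyIntegrable_mul_of_continuous (locallyIntegrable_norm (hk.sub hk')) (hw.pow 2)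

variable {ν μ : Measure ℝ} [NullSingletonClass ν] [IsLocallyFiniteMeasure ν]
  [IsLocallyFiniteMeasure μ] {g k k' u v f f₁ p p₁ : ℝ → ℂ} {c y : ℝ}

theorem IsSystemSol.norm_Wr_le (hu : IsSystemSol ν μ g k' u v) (hf : IsSystemSol ν μ g k f f₁)
    (hg : LocallyIntegrable g ν) (hk : LocallyIntegrable k μ) (hk' : LocallyIntegrable k' μ)
    {w : ℝ → ℝ} (hw : Continuous w) (hfw : ∀ t, ‖f t‖ ≤ w t) {S ε : ℝ} (hS : 0 ≤ S)
    (huw : ∀ t ∈ uIcc c y, ‖u t‖ ≤ S * w t)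
    (hε : ∫ t in uIoc c y, ‖k t - k' t‖ * w t ^ 2 ∂μ ≤ ε) {x : ℝ} (hx : x ∈ uIcc c y) :
    ‖Wr u v f f₁ x‖ ≤ ‖Wr u v f f₁ c‖ + S * ε := by
  have hint : IntegrableOn (fun t => S * (‖k t - k' t‖ * w t ^ 2)) (uIoc c y) μ :=
    (intervalIntegrable_of_locallyIntegrable
      (locallyIntegrable_norm_sub_mul_sq hk hk' hw) c y).def'.const_mul S
  have hdensity : ∀ t ∈ uIcc c y,
      ‖(k t - k' t) * (u t * f t)‖ ≤ S * (‖k t - k' t‖ * w t ^ 2) := fun t ht =>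
    calc ‖(k t - k' t) * (u t * f t)‖ = ‖k t - k' t‖ * (‖u t‖ * ‖f t‖) := by
          rw [norm_mul, norm_mul]
      _ ≤ ‖k t - k' t‖ * ((S * w t) * w t) := by
          gcongr
          exacts [(norm_nonneg _).trans (huw t ht), huw t ht, hfw t]
      _ = S * (‖k t - k' t‖ * w t ^ 2) := by ring
  rw [hu.isPrimitive_Wr hf hg hk' hk c x]
  refine (norm_add_le _ _).trans (add_le_add_right ?_ _)
  calc ‖∫ t in c..x, (k t - k' t) * (u t * f t) ∂μ‖
      ≤ ∫ t in uIoc c y, S * (‖k t - k' t‖ * w t ^ 2) ∂μ :=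
        norm_intervalIntegral_le_setIntegral_uIoc hx hint hdensity
    _ = S * ∫ t in uIoc c y, ‖k t - k' t‖ * w t ^ 2 ∂μ := integral_const_mul _ _
    _ ≤ S * ε := mul_le_mul_of_nonneg_left hε hS

theorem IsSystemSol.bddAbove_norm_Wr (hu : IsSystemSol ν μ g k' u v)
    (hf : IsSystemSol ν μ g k f f₁) (hg : LocallyIntegrable g ν) (hk : LocallyIntegrable k μ)
    (hk' : LocallyIntegrable k' μ) (c d : ℝ) :
    BddAbove ((fun x => ‖Wr u v f f₁ x‖) '' Icc c d) :=
  (hu.isPrimitive_Wr hf hg hk' hk).bddAbove_norm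
    (locallyIntegrable_mul_of_continuous (hk.sub hk')
      (hu.continuous_fst.mul hf.continuous_fst)) c d

theorem IsFundamentalPair.norm_le (hfp : IsFundamentalPair ν μ g k f f₁ p p₁)
    (hu : IsSystemSol ν μ g k' u v) (hg : LocallyIntegrable g ν) (hk : LocallyIntegrable k μ)
    (hk' : LocallyIntegrable k' μ)
    (hsmall : ∫ t in uIoc c y, ‖k t - k' t‖ * (‖f t‖ + ‖p t‖) ^ 2 ∂μ ≤ 1 / 4) :
    ‖u y‖ ≤ 2 * (‖Wr u v f f₁ c‖ + ‖Wr u v p p₁ c‖) * (‖f y‖ + ‖p y‖) := by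
  set N : ℝ → ℝ := fun x => ‖Wr u v f f₁ x‖ + ‖Wr u v p p₁ x‖
  have hu_le : ∀ x, ‖u x‖ ≤ N x * (‖f x‖ + ‖p x‖) := fun x =>
    norm_le_of_Wr_eq_one (hfp.Wr_eq_one x)
  have hw : Continuous fun t => ‖f t‖ + ‖p t‖ :=
    hfp.fst.continuous_fst.norm.add hfp.snd.continuous_fst.norm
  have hbdd : BddAbove (N '' uIcc c y) := by
    obtain ⟨B₁, hB₁⟩ := hu.bddAbove_norm_Wr hfp.fst hg hk hk' (c ⊓ y) (c ⊔ y)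
    obtain ⟨B₂, hB₂⟩ := hu.bddAbove_norm_Wr hfp.snd hg hk hk' (c ⊓ y) (c ⊔ y)
    exact ⟨B₁ + B₂, forall_mem_image.2 fun x hx =>
      add_le_add (hB₁ (mem_image_of_mem _ hx)) (hB₂ (mem_image_of_mem _ hx))⟩
  have habsorb : ∀ S, (∀ x ∈ uIcc c y, N x ≤ S) → ∀ x ∈ uIcc c y, N x ≤ N c + S / 2 := by
    intro S hS x hx
    have hS0 : 0 ≤ S := (by positivity : 0 ≤ N c).trans (hS c left_mem_uIcc)
    have huS : ∀ t ∈ uIcc c y, ‖u t‖ ≤ S * (‖f t‖ + ‖p t‖) := fun t ht =>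
      (hu_le t).trans (mul_le_mul_of_nonneg_right (hS t ht) (by positivity))
    have hWf := hu.norm_Wr_le hfp.fst hg hk hk' hw
      (fun t => le_add_of_nonneg_right (norm_nonneg _)) hS0 huS hsmall hx
    have hWp := hu.norm_Wr_le hfp.snd hg hk hk' hw
      (fun t => le_add_of_nonneg_left (norm_nonneg _)) hS0 huS hsmall hx
    simp only [N]
    linarith
  have hNy : N y ≤ 2 * N c := le_two_mul_of_forall_le_add_half hbdd habsorb y right_mem_uIcc
  exact (hu_le y).trans (mul_le_mul_of_nonneg_right hNy (by positivity))

end Comparison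

section Tail

open Asymptotics

theorem exists_eventually_setIntegral_uIoc_le {μ : Measure ℝ} {l : Filter ℝ} [l.NeBot]
    {s : ℕ → Set ℝ} (hs : l.HasAntitoneBasis s) (hconn : ∀ n, (s n).OrdConnected)
    (hempty : ⋂ n, s n = ∅) {w : ℝ → ℝ} (hw : IntegrableAtFilter w l μ) (hw0 : 0 ≤ w) {ε : ℝ}
    (hε : 0 < ε) : ∃ c, ∀ᶠ y in l, ∫ t in uIoc c y, w t ∂μ ≤ ε := by
  obtain ⟨S, hS, hwS⟩ := hw
  obtain ⟨m, hm⟩ := hs.mem_iff.1 hS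
  have htail : Tendsto (fun n => ∫ t in s n, w t ∂μ) atTop (nhds 0) := by
    simpa [hempty] using tendsto_setIntegral_of_antitone (fun n => (hconn n).measurableSet)
      hs.antitone ⟨m, hwS.mono_set hm⟩
  obtain ⟨n, hmn, hn⟩ := ((eventually_ge_atTop m).and (htail.eventually_lt_const hε)).exists
  obtain ⟨c, hc⟩ := l.nonempty_of_mem (hs.mem n)
  refine ⟨c, mem_of_superset (hs.mem n) fun y hy => ?_⟩
  have hint : IntegrableOn w (s n) μ := hwS.mono_set ((hs.antitone hmn).trans hm)
  exact (setIntegral_mono_set hint (.of_forall hw0)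
    ((hconn n).uIoc_subset hc hy).eventuallyLE).trans hn.le

theorem integrableAtFilter_mul_add_sq {μ : Measure ℝ} {l : Filter ℝ} [l.IsMeasurablyGenerated]
    {ρ a b : ℝ → ℝ} (hρ : LocallyIntegrable ρ μ) (ha : Continuous a) (hb : Continuous b)
    (ha2 : IntegrableAtFilter (fun t => ρ t * a t ^ 2) l μ)
    (hb2 : IntegrableAtFilter (fun t => ρ t * b t ^ 2) l μ) :
    IntegrableAtFilter (fun t => ρ t * (a t + b t) ^ 2) l μ := by
  have hsq : ∀ t, ‖ρ t * (a t + b t) ^ 2‖ ≤ 2 * ‖ρ t * a t ^ 2 + ρ t * b t ^ 2‖ := fun t => by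
    rw [← mul_add, norm_mul, norm_mul, Real.norm_of_nonneg (sq_nonneg _),
      Real.norm_of_nonneg (by positivity : 0 ≤ a t ^ 2 + b t ^ 2), mul_left_comm]
    exact mul_le_mul_of_nonneg_left (by nlinarith [sq_nonneg (a t - b t)]) (norm_nonneg _)
  exact (IsBigO.of_bound 2 (.of_forall hsq)).integrableAtFilter
    (locallyIntegrable_mul_of_continuous hρ
      ((ha.add hb).pow 2)).aestronglyMeasurable.stronglyMeasurableAtFilter (ha2.add hb2)

variable {ν μ : Measure ℝ} [NullSingletonClass ν] [IsLocallyFiniteMeasure ν]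
  [IsLocallyFiniteMeasure μ] {g k k' u v f f₁ p p₁ : ℝ → ℂ} {l : Filter ℝ} {s : ℕ → Set ℝ}
  {ρ : ℝ → ℝ}

theorem IsFundamentalPair.isBigO [l.NeBot] (hfp : IsFundamentalPair ν μ g k f f₁ p p₁)
    (hu : IsSystemSol ν μ g k' u v) (hg : LocallyIntegrable g ν) (hk : LocallyIntegrable k μ)
    (hk' : LocallyIntegrable k' μ) (hs : l.HasAntitoneBasis s) (hconn : ∀ n, (s n).OrdConnected)
    (hempty : ⋂ n, s n = ∅)
    (hint : IntegrableAtFilter (fun t => ‖k t - k' t‖ * (‖f t‖ + ‖p t‖) ^ 2) l μ) :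
    u =O[l] fun t => ‖f t‖ + ‖p t‖ := by
  obtain ⟨c, hc⟩ := exists_eventually_setIntegral_uIoc_le hs hconn hempty hint
    (fun t => by positivity) (by norm_num : (0 : ℝ) < 1 / 4)
  refine .of_bound (2 * (‖Wr u v f f₁ c‖ + ‖Wr u v p p₁ c‖)) (hc.mono fun y hy => ?_)
  rw [Real.norm_of_nonneg (by positivity : 0 ≤ ‖f y‖ + ‖p y‖)]
  exact hfp.norm_le hu hg hk hk' hy

theorem integrableAtFilter_mul_norm_sq_of_forall [l.NeBot] [l.IsMeasurablyGenerated]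
    (hs : l.HasAntitoneBasis s) (hconn : ∀ n, (s n).OrdConnected) (hempty : ⋂ n, s n = ∅)
    (hg : LocallyIntegrable g ν) (hk : LocallyIntegrable k μ) (hk' : LocallyIntegrable k' μ)
    (hρ : LocallyIntegrable ρ μ) {C : ℝ} (hC : ∀ t, ‖k t - k' t‖ ≤ C * ‖ρ t‖)
    (hL2 : ∀ f f₁, IsSystemSol ν μ g k f f₁ → IntegrableAtFilter (fun t => ρ t * ‖f t‖ ^ 2) l μ)
    (hu : IsSystemSol ν μ g k' u v) : IntegrableAtFilter (fun t => ρ t * ‖u t‖ ^ 2) l μ := by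
  obtain ⟨f, f₁, p, p₁, hfp⟩ := exists_isFundamentalPair hg hk
  have hf := hfp.fst.continuous_fst.norm
  have hp := hfp.snd.continuous_fst.norm
  have hw : IntegrableAtFilter (fun t => ρ t * (‖f t‖ + ‖p t‖) ^ 2) l μ :=
    integrableAtFilter_mul_add_sq hρ hf hp (hL2 f f₁ hfp.fst) (hL2 p p₁ hfp.snd)
  have hk_isBigO : (fun t => ‖k t - k' t‖) =O[l] ρ :=
    .of_bound C (.of_forall fun t => (norm_norm _).trans_le (hC t))
  have hkw : IntegrableAtFilter (fun t => ‖k t - k' t‖ * (‖f t‖ + ‖p t‖) ^ 2) l μ :=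
    (hk_isBigO.mul (isBigO_refl _ l)).integrableAtFilter
      (locallyIntegrable_norm_sub_mul_sq hk hk'
        (hf.add hp)).aestronglyMeasurable.stronglyMeasurableAtFilter hw
  have hu_isBigO : u =O[l] fun t => ‖f t‖ + ‖p t‖ :=
    hfp.isBigO hu hg hk hk' hs hconn hempty hkw
  exact ((isBigO_refl ρ l).mul (hu_isBigO.norm_left.pow 2)).integrableAtFilter
    (locallyIntegrable_mul_of_continuous hρ
      (hu.continuous_fst.norm.pow 2)).aestronglyMeasurable.stronglyMeasurableAtFilter hw

end Tail

section TimeScale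

variable {S T : Set ℝ} {μ ν : Measure ℝ}

theorem isLocallyFiniteMeasure_of_forall_Ioo (h : ∀ c d, c ≤ d → μ (Ioo c d) < ∞) :
    IsLocallyFiniteMeasure μ :=
  ⟨fun x => ⟨Ioo (x - 1) (x + 1), Ioo_mem_nhds (by linarith) (by linarith),
    h _ _ (by linarith)⟩⟩

theorem tsSigma_eq_of_disjoint_Ioc {c d : ℝ} (hcd : c ≤ d) (h : Disjoint S (Ioc c d)) :
    tsSigma S d = tsSigma S c := by
  have hset : {s | s ∈ S ∧ d < s} = {s | s ∈ S ∧ c < s} := by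
    ext s
    exact and_congr_right fun hs =>
      ⟨hcd.trans_lt, fun hcs => not_le.1 fun hsd => disjoint_left.1 h hs ⟨hcs, hsd⟩⟩
  rw [tsSigma, tsSigma, hset]

theorem measure_compl_eq_zero_of_Ioc_eq_tsSigma (hS : IsClosed S)
    (hμ : ∀ c d, c ≤ d → μ (Ioc c d) = ENNReal.ofReal (tsSigma S d - tsSigma S c)) :
    μ Sᶜ = 0 := by
  refine measure_null_of_locally_null _ fun x hx => ?_
  obtain ⟨c, d, hxcd, hcd⟩ := mem_nhds_iff_exists_Ioo_subset.1 (hS.isOpen_compl.mem_nhds hx)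
  obtain ⟨e, hxe, hed⟩ := exists_between hxcd.2
  have hce : c ≤ e := (hxcd.1.trans hxe).le
  refine ⟨Ioc c e, mem_nhdsWithin_of_mem_nhds (Ioc_mem_nhds hxcd.1 hxe), ?_⟩
  have hgap : Disjoint S (Ioc c e) :=
    disjoint_left.2 fun s hs hse => hcd (Ioc_subset_Ioo_right hed hse) hs
  rw [hμ c e hce, tsSigma_eq_of_disjoint_Ioc hce hgap, sub_self, ENNReal.ofReal_zero]

theorem tsKappa_subset : tsKappa T ⊆ T := by
  unfold tsKappa
  split_ifs
  exacts [sdiff_subset, subset_rfl]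

theorem mem_tsKappa_of_lt {s t : ℝ} (hs : s ∈ T) (ht : t ∈ T) (hst : s < t) :
    t ∈ tsKappa T := by
  unfold tsKappa
  split_ifs with h
  · exact ⟨ht, ((csInf_le h.1 hs).trans_lt hst).ne'⟩
  · exact ht

theorem tsKappa_inter_Ici {s t : ℝ} (hs : s ∈ T) (hst : s < t) :
    tsKappa T ∩ Ici t = T ∩ Ici t :=
  (inter_subset_inter_left _ tsKappa_subset).antisymm fun _ hx =>
    ⟨mem_tsKappa_of_lt hs hx.1 (hst.trans_le hx.2), hx.2⟩

theorem tsKappa_nonempty (hne : T.Nonempty) : (tsKappa T).Nonempty := by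
  rcases T.subsingleton_or_nontrivial with hsub | hnt
  · obtain ⟨x, rfl⟩ := hsub.eq_empty_or_singleton.resolve_left hne.ne_empty
    have hσ : tsSigma {x} x = x := by
      rw [tsSigma, if_neg (by rintro ⟨s, rfl, hs⟩; exact hs.false), csSup_singleton]
    simp only [tsKappa, csInf_singleton, hσ, lt_irrefl, and_false, if_false, singleton_nonempty]
  · obtain ⟨s, hs, t, ht, hst⟩ := hnt.exists_lt
    exact ⟨t, mem_tsKappa_of_lt hs ht hst⟩

theorem isClosed_tsKappa (hT : IsClosed T) : IsClosed (tsKappa T) := by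
  unfold tsKappa
  split_ifs with h
  · have hset : T \ {sInf T} = T ∩ Ici (tsSigma T (sInf T)) := by
      ext s
      refine and_congr_right fun hs => ⟨fun hne => ?_, fun hle => (h.2.trans_le hle).ne'⟩
      have hlt : sInf T < s := (csInf_le h.1 hs).lt_of_ne' hne
      rw [mem_Ici, tsSigma, if_pos ⟨s, hs, hlt⟩]
      exact csInf_le ⟨sInf T, fun x hx => hx.2.le⟩ ⟨hs, hlt⟩
    exact hset ▸ hT.inter isClosed_Ici
  · exact hT

/-- The first point of `S` at or after `t`, and `sup S` when there is none. The extension of a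
coefficient `p` from a time scale to the line is `p` composed with this map. -/
noncomputable def nextPoint (S : Set ℝ) (t : ℝ) : ℝ :=
  if (S ∩ Ici t).Nonempty then sInf (S ∩ Ici t) else sSup S

theorem extK_eq_nextPoint (p : ℝ → ℂ) (t : ℝ) : extK T p t = p (nextPoint (tsKappa T) t) := by
  by_cases ht : t ∈ tsKappa T
  · have hleast : IsLeast (tsKappa T ∩ Ici t) t := ⟨⟨ht, mem_Ici.2 le_rfl⟩, fun s hs => hs.2⟩
    rw [extK, if_pos ht, nextPoint, if_pos hleast.nonempty, hleast.csInf_eq]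
  · have hset : {s | s ∈ tsKappa T ∧ t < s} = tsKappa T ∩ Ici t := by
      ext s
      exact and_congr_right fun hs =>
        ⟨le_of_lt, fun hts => lt_of_le_of_ne hts fun h => ht (h ▸ hs)⟩
    rw [extK, if_neg ht, tsSigma, hset, nextPoint]

theorem isLeast_nextPoint (hS : IsClosed S) {t : ℝ} (h : (S ∩ Ici t).Nonempty) :
    IsLeast (S ∩ Ici t) (nextPoint S t) := by
  rw [nextPoint, if_pos h]
  exact (hS.inter isClosed_Ici).isLeast_csInf h ⟨t, fun s hs => hs.2⟩

theorem monotone_nextPoint (hS : IsClosed S) : Monotone (nextPoint S) := by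
  intro x y hxy
  have hsub : S ∩ Ici y ⊆ S ∩ Ici x := inter_subset_inter_right _ (Ici_subset_Ici.2 hxy)
  by_cases hy : (S ∩ Ici y).Nonempty
  · exact (isLeast_nextPoint hS (hy.mono hsub)).2 (hsub (isLeast_nextPoint hS hy).1)
  · rw [nextPoint.eq_1 S y, if_neg hy]
    by_cases hx : (S ∩ Ici x).Nonempty
    · exact le_csSup ⟨y, fun s hs => not_lt.1 fun h => hy ⟨s, hs, h.le⟩⟩
        (isLeast_nextPoint hS hx).1.1
    · rw [nextPoint, if_neg hx]

/-- The points of the line having a point of `T` strictly to their left and one at or to their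
right; on this set `nextPoint` and `tsRho` are generalized inverses of each other. -/
def tsHull (T : Set ℝ) : Set ℝ := {t | (∃ s ∈ T, s < t) ∧ (T ∩ Ici t).Nonempty}

theorem isLeast_nextPoint_tsKappa (hT : IsClosed T) {t : ℝ} (ht : t ∈ tsHull T) :
    IsLeast (T ∩ Ici t) (nextPoint (tsKappa T) t) := by
  obtain ⟨⟨s, hs, hst⟩, hne⟩ := ht
  rw [← tsKappa_inter_Ici hs hst] at hne ⊢
  exact isLeast_nextPoint (isClosed_tsKappa hT) hne

theorem nextPoint_tsKappa_lt (hT : IsClosed T) {t d : ℝ} (ht : t ∈ tsHull T)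
    (htd : t < tsRho T d) : nextPoint (tsKappa T) t < d := by
  unfold tsRho at htd
  split_ifs at htd with hd
  · obtain ⟨s, ⟨hs, hsd⟩, hts⟩ := exists_lt_of_lt_csSup hd htd
    exact ((isLeast_nextPoint_tsKappa hT ht).2 ⟨hs, hts.le⟩).trans_lt hsd
  · obtain ⟨s, hs, hst⟩ := ht.1
    have hbdd : BddBelow T := ⟨d, fun x hx => not_lt.1 fun hxd => hd ⟨x, hx, hxd⟩⟩
    exact absurd (htd.trans_le (csInf_le hbdd hs)) hst.not_gt

theorem le_tsRho_of_nextPoint_tsKappa_lt (hT : IsClosed T) {t d : ℝ} (ht : t ∈ tsHull T)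
    (htd : nextPoint (tsKappa T) t < d) : t ≤ tsRho T d := by
  obtain ⟨⟨hmem, hle⟩, -⟩ := isLeast_nextPoint_tsKappa hT ht
  rw [tsRho, if_pos ⟨_, hmem, htd⟩]
  exact hle.trans (le_csSup ⟨d, fun s hs => hs.2.le⟩ ⟨hmem, htd⟩)

theorem Ioo_tsRho_subset_tsHull (hne : T.Nonempty) {c d : ℝ} (hcd : c ≤ d) :
    Ioo (tsRho T c) (tsRho T d) ⊆ tsHull T := by
  rintro t ⟨hct, htd⟩
  unfold tsRho at hct htd
  split_ifs at hct htd with hc hd hd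
  · obtain ⟨s, hs⟩ := hc
    obtain ⟨s', hs', hts'⟩ := exists_lt_of_lt_csSup hd htd
    exact ⟨⟨s, hs.1, (le_csSup ⟨c, fun x hx => hx.2.le⟩ hs).trans_lt hct⟩, s', hs'.1, hts'.le⟩
  · obtain ⟨s, hs⟩ := hc
    exact absurd ⟨s, hs.1, hs.2.trans_le hcd⟩ hd
  · obtain ⟨s, hs, hst⟩ := exists_lt_of_csInf_lt hne hct
    obtain ⟨s', hs', hts'⟩ := exists_lt_of_lt_csSup hd htd
    exact ⟨⟨s, hs, hst⟩, s', hs'.1, hts'.le⟩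
  · exact absurd (hct.trans htd) (lt_irrefl _)

theorem eq_map_nextPoint_of_Ico_eq_tsRho (hne : T.Nonempty) (hT : IsClosed T)
    (hν : ∀ c d, c ≤ d → ν (Ico c d) = ENNReal.ofReal (tsRho T d - tsRho T c)) :
    ν = (volume.restrict (tsHull T)).map (nextPoint (tsKappa T)) := by
  have hτ : Measurable (nextPoint (tsKappa T)) :=
    (monotone_nextPoint (isClosed_tsKappa hT)).measurable
  have : IsLocallyFiniteMeasure ν := isLocallyFiniteMeasure_of_forall_Ioo fun c d hcd =>
    (measure_mono Ioo_subset_Ico_self).trans_lt (hν c d hcd ▸ ENNReal.ofReal_lt_top)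
  refine Measure.ext_of_Ico _ _ fun c d hcd => ?_
  rw [hν c d hcd.le, Measure.map_apply hτ measurableSet_Ico,
    Measure.restrict_apply (hτ measurableSet_Ico)]
  apply le_antisymm
  · rw [← Real.volume_Ioo]
    refine measure_mono fun t ht => ?_
    have hhull := Ioo_tsRho_subset_tsHull hne hcd.le ht
    exact ⟨⟨not_lt.1 fun h =>
      ht.1.not_ge (le_tsRho_of_nextPoint_tsKappa_lt hT hhull h),
      nextPoint_tsKappa_lt hT hhull ht.2⟩, hhull⟩
  · rw [← Real.volume_Icc]
    exact measure_mono fun t ht =>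
      ⟨not_lt.1 fun h => ht.1.1.not_gt (nextPoint_tsKappa_lt hT ht.2 h),
        le_tsRho_of_nextPoint_tsKappa_lt hT ht.2 ht.1.2⟩

theorem nextPoint_tsKappa_of_notMem_tsHull (hne : T.Nonempty) {t : ℝ} (ht : t ∉ tsHull T) :
    nextPoint (tsKappa T) t = sInf (tsKappa T) ∨ nextPoint (tsKappa T) t = sSup (tsKappa T) := by
  by_cases hleft : ∃ s ∈ T, s < t
  · refine .inr (if_neg fun hright => ht ⟨hleft, ?_⟩)
    exact hright.mono (inter_subset_inter_left _ tsKappa_subset)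
  · push Not at hleft
    have hset : tsKappa T ∩ Ici t = tsKappa T :=
      inter_eq_left.2 fun s hs => hleft s (tsKappa_subset hs)
    left
    rw [nextPoint, hset, if_pos (tsKappa_nonempty hne)]

variable {E : Type*} [NormedAddCommGroup E] {φ : ℝ → E}

theorem integrableOn_comp_of_monotone {m : Measure ℝ} {τ : ℝ → ℝ} (hτ : Monotone τ)
    (hφ : LocallyIntegrable φ (m.map τ)) (c d : ℝ) : IntegrableOn (φ ∘ τ) (Ioc c d) m := by
  have hcompact : IntegrableOn φ (Icc (τ c) (τ d)) (m.map τ) :=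
    hφ.integrableOn_isCompact isCompact_Icc
  rw [IntegrableOn, Measure.restrict_map hτ.measurable measurableSet_Icc] at hcompact
  exact IntegrableOn.mono_set (hcompact.comp_measurable hτ.measurable)
    fun t ht => ⟨hτ ht.1.le, hτ ht.2⟩

theorem integrableOn_comp_inter_preimage_singleton {α : Type*} [MeasurableSpace α]
    {m : Measure α} {τ : α → ℝ} (hτ : Measurable τ) {s : Set α} (hs : MeasurableSet s)
    (hms : m s ≠ ∞) (φ : ℝ → E) (x : ℝ) : IntegrableOn (φ ∘ τ) (s ∩ τ ⁻¹' {x}) m :=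
  (integrableOn_const (C := φ x) (measure_ne_top_of_subset inter_subset_left hms)).congr_fun
    (fun _ ht => congrArg φ ht.2.symm) (hs.inter (hτ (measurableSet_singleton x)))

theorem locallyIntegrable_comp_nextPoint (hne : T.Nonempty) (hT : IsClosed T)
    (hν : ∀ c d, c ≤ d → ν (Ico c d) = ENNReal.ofReal (tsRho T d - tsRho T c))
    (hφ : LocallyIntegrable φ ν) : LocallyIntegrable (φ ∘ nextPoint (tsKappa T)) volume := by
  set τ := nextPoint (tsKappa T)
  have hτ : Monotone τ := monotone_nextPoint (isClosed_tsKappa hT)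
  refine locallyIntegrable_of_forall_Ioc fun c d => ?_
  have hhull : IntegrableOn (φ ∘ τ) (Ioc c d ∩ tsHull T) volume := by
    rw [eq_map_nextPoint_of_Ico_eq_tsRho hne hT hν] at hφ
    simpa only [IntegrableOn, Measure.restrict_restrict measurableSet_Ioc] using
      integrableOn_comp_of_monotone hτ hφ c d
  have hconst : ∀ x, IntegrableOn (φ ∘ τ) (Ioc c d ∩ τ ⁻¹' {x}) volume :=
    integrableOn_comp_inter_preimage_singleton hτ.measurable measurableSet_Ioc
      measure_Ioc_lt_top.ne φ
  refine (hhull.union ((hconst (sInf (tsKappa T))).union (hconst (sSup (tsKappa T))))).mono_set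
    fun t ht => ?_
  by_cases hmem : t ∈ tsHull T
  · exact .inl ⟨ht, hmem⟩
  · exact .inr ((nextPoint_tsKappa_of_notMem_tsHull hne hmem).imp (⟨ht, ·⟩) (⟨ht, ·⟩))

theorem locallyIntegrable_one_div_extK (hne : T.Nonempty) (hT : IsClosed T)
    (hν : ∀ c d, c ≤ d → ν (Ico c d) = ENNReal.ofReal (tsRho T d - tsRho T c)) {p : ℝ → ℂ}
    (hp : LocallyIntegrable (fun t => 1 / p t) ν) :
    LocallyIntegrable (fun t => 1 / extK T p t) volume := by
  simpa only [Function.comp_def, ← extK_eq_nextPoint] using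
    locallyIntegrable_comp_nextPoint hne hT hν hp

end TimeScale

section SquareIntegrability

variable {T : Set ℝ} {μ : Measure ℝ} {r : ℝ → ℝ} {u : ℝ → ℂ}

theorem sqWeight_eq_ofReal (r : ℝ → ℝ) (u : ℝ → ℂ) (t : ℝ) :
    sqWeight r u t = ENNReal.ofReal (r t * ‖u t‖ ^ 2) := by
  rw [sqWeight, ENNReal.ofReal_mul' (sq_nonneg _), ENNReal.ofReal_pow (norm_nonneg _),
    ofReal_norm, enorm_eq_nnnorm, mul_comm]

theorem setLIntegral_sqWeight_lt_top_iff (hr : LocallyIntegrable r μ) (hr0 : 0 ≤ᵐ[μ] r)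
    (hu : Continuous u) (s : Set ℝ) :
    ∫⁻ t in s, sqWeight r u t ∂μ < ∞ ↔ IntegrableOn (fun t => r t * ‖u t‖ ^ 2) s μ := by
  have hmeas : AEStronglyMeasurable (fun t => r t * ‖u t‖ ^ 2) (μ.restrict s) :=
    (locallyIntegrable_mul_of_continuous hr (hu.norm.pow 2)).aestronglyMeasurable.restrict
  have hnonneg : 0 ≤ᵐ[μ.restrict s] fun t => r t * ‖u t‖ ^ 2 :=
    (ae_restrict_of_ae hr0).mono fun t ht => mul_nonneg ht (sq_nonneg _)
  simp only [sqWeight_eq_ofReal, ← hasFiniteIntegral_iff_ofReal hnonneg]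
  exact (and_iff_right hmeas).symm

theorem L2NearLeft.of_bddBelow (hT : BddBelow T) (hr : LocallyIntegrable r μ) (hr0 : 0 ≤ᵐ[μ] r)
    (hu : Continuous u) : L2NearLeft T μ r u := fun c _ => by
  rw [setLIntegral_sqWeight_lt_top_iff hr hr0 hu]
  refine ((locallyIntegrable_mul_of_continuous hr (hu.norm.pow 2)).integrableOn_isCompact
    (isCompact_Icc (a := sInf T) (b := c))).mono_set ?_
  rintro t ⟨⟨⟨s, hs, hst⟩, htc⟩, -⟩
  exact ⟨(csInf_le hT hs).trans hst.le, htc⟩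

theorem L2NearRight.of_bddAbove (hT : BddAbove T) (hr : LocallyIntegrable r μ)
    (hr0 : 0 ≤ᵐ[μ] r) (hu : Continuous u) : L2NearRight T μ r u := fun c _ => by
  rw [setLIntegral_sqWeight_lt_top_iff hr hr0 hu]
  refine ((locallyIntegrable_mul_of_continuous hr (hu.norm.pow 2)).integrableOn_isCompact
    (isCompact_Icc (a := c) (b := sSup T))).mono_set ?_
  rintro t ⟨⟨hct, s, hs, hts⟩, -⟩
  exact ⟨hct, hts.le.trans (le_csSup hT hs)⟩

theorem setLIntegral_inter_tsKappa (hκ : μ (tsKappa T)ᶜ = 0) (s : Set ℝ) (F : ℝ → ℝ≥0∞) :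
    ∫⁻ t in s ∩ tsKappa T, F t ∂μ = ∫⁻ t in s, F t ∂μ :=
  setLIntegral_congr (inter_ae_eq_left_of_ae_eq_univ (ae_eq_univ.2 hκ))

theorem l2NearLeft_iff_integrableAtFilter_atBot (hne : T.Nonempty) (hT : ¬BddBelow T)
    (hκ : μ (tsKappa T)ᶜ = 0) (hr : LocallyIntegrable r μ) (hr0 : 0 ≤ᵐ[μ] r)
    (hu : Continuous u) :
    L2NearLeft T μ r u ↔ IntegrableAtFilter (fun t => r t * ‖u t‖ ^ 2) atBot μ := by
  have hset : ∀ c, {t | (∃ s ∈ T, s < t) ∧ t ≤ c} = Iic c := fun c =>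
    ext fun t => and_iff_right (not_bddBelow_iff.1 hT t)
  have hloc : LocallyIntegrable (fun t => r t * ‖u t‖ ^ 2) μ :=
    locallyIntegrable_mul_of_continuous hr (hu.norm.pow 2)
  have hiff : ∀ c, ∫⁻ t in {t | (∃ s ∈ T, s < t) ∧ t ≤ c} ∩ tsKappa T, sqWeight r u t ∂μ < ∞ ↔
      IntegrableAtFilter (fun t => r t * ‖u t‖ ^ 2) atBot μ := fun c => by
    rw [setLIntegral_inter_tsKappa hκ, hset, setLIntegral_sqWeight_lt_top_iff hr hr0 hu,
      integrableOn_Iic_iff_integrableAtFilter_atBot, and_iff_left (hloc.locallyIntegrableOn _)]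
  obtain ⟨c₀, hc₀⟩ := tsKappa_nonempty hne
  exact ⟨fun h => (hiff c₀).1 (h c₀ hc₀), fun h c _ => (hiff c).2 h⟩

theorem l2NearRight_iff_integrableAtFilter_atTop (hne : T.Nonempty) (hT : ¬BddAbove T)
    (hκ : μ (tsKappa T)ᶜ = 0) (hr : LocallyIntegrable r μ) (hr0 : 0 ≤ᵐ[μ] r)
    (hu : Continuous u) :
    L2NearRight T μ r u ↔ IntegrableAtFilter (fun t => r t * ‖u t‖ ^ 2) atTop μ := by
  have hset : ∀ c, {t | c ≤ t ∧ ∃ s ∈ T, t < s} = Ici c := fun c =>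
    ext fun t => and_iff_left (not_bddAbove_iff.1 hT t)
  have hloc : LocallyIntegrable (fun t => r t * ‖u t‖ ^ 2) μ :=
    locallyIntegrable_mul_of_continuous hr (hu.norm.pow 2)
  have hiff : ∀ c, ∫⁻ t in {t | c ≤ t ∧ ∃ s ∈ T, t < s} ∩ tsKappa T, sqWeight r u t ∂μ < ∞ ↔
      IntegrableAtFilter (fun t => r t * ‖u t‖ ^ 2) atTop μ := fun c => by
    rw [setLIntegral_inter_tsKappa hκ, hset, setLIntegral_sqWeight_lt_top_iff hr hr0 hu,
      integrableOn_Ici_iff_integrableAtFilter_atTop, and_iff_left (hloc.locallyIntegrableOn _)]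
  obtain ⟨c₀, hc₀⟩ := tsKappa_nonempty hne
  exact ⟨fun h => (hiff c₀).1 (h c₀ hc₀), fun h c _ => (hiff c).2 h⟩

end SquareIntegrability

section Alternative

variable {T : Set ℝ} {μ : Measure ℝ} {p q : ℝ → ℂ} {r : ℝ → ℝ} {z : ℂ} {u u₁ : ℝ → ℂ}

theorem isSLSol_zero_iff_isSystemSol : IsSLSol T μ p (cR r) q z 0 u u₁ ↔
    IsSystemSol volume μ (fun t => 1 / extK T p t) (fun t => q t - z * cR r t) u u₁ := by
  have hfst : ∀ t, u₁ t / extK T p t = 1 / extK T p t * u₁ t := fun t => by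
    rw [one_div, div_eq_inv_mul]
  simp only [IsSLSol, IsPair, hfst, Pi.zero_apply, mul_zero, sub_zero]
  refine ⟨fun h => ⟨.of_le fun c x hcx => (h c x hcx).1, .of_le fun c x hcx => ?_⟩,
    fun h c x hcx => ⟨h.fst c x, ?_⟩⟩
  · rw [intervalIntegral.integral_of_le hcx]
    exact (h c x hcx).2
  · rw [← intervalIntegral.integral_of_le hcx]
    exact h.snd c x

theorem IsSLSol.continuous (h : IsSLSol T μ p (cR r) q z 0 u u₁) : Continuous u :=
  (isSLSol_zero_iff_isSystemSol.1 h).continuous_fst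

theorem locallyIntegrable_cR {f : ℝ → ℝ} (hf : LocallyIntegrable f μ) :
    LocallyIntegrable (cR f) μ := fun x =>
  let ⟨s, hs, hint⟩ := hf x
  ⟨s, hs, hint.ofReal⟩

theorem IsSLSol.integrableAtFilter_of_forall [IsLocallyFiniteMeasure μ] {l : Filter ℝ} [l.NeBot]
    [l.IsMeasurablyGenerated] {s : ℕ → Set ℝ} (hs : l.HasAntitoneBasis s)
    (hconn : ∀ n, (s n).OrdConnected) (hempty : ⋂ n, s n = ∅)
    (hg : LocallyIntegrable (fun t => 1 / extK T p t) volume) (hr : LocallyIntegrable r μ)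
    (hq : LocallyIntegrable q μ) {z₀ : ℂ}
    (hL2 : ∀ f f₁, IsSLSol T μ p (cR r) q z₀ 0 f f₁ →
      IntegrableAtFilter (fun t => r t * ‖f t‖ ^ 2) l μ)
    (hu : IsSLSol T μ p (cR r) q z 0 u u₁) :
    IntegrableAtFilter (fun t => r t * ‖u t‖ ^ 2) l μ := by
  have hcoeff : ∀ w : ℂ, LocallyIntegrable (fun t => q t - w * cR r t) μ := fun w =>
    hq.sub ((locallyIntegrable_cR hr).smul w)
  have hC : ∀ t, ‖q t - z₀ * cR r t - (q t - z * cR r t)‖ ≤ ‖z - z₀‖ * ‖r t‖ := fun t => by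
    rw [sub_sub_sub_cancel_left, ← sub_mul, norm_mul, cR, Complex.norm_real]
  exact integrableAtFilter_mul_norm_sq_of_forall hs hconn hempty hg (hcoeff z₀) (hcoeff z) hr hC
    (fun f f₁ hf => hL2 f f₁ (isSLSol_zero_iff_isSystemSol.2 hf))
    (isSLSol_zero_iff_isSystemSol.1 hu)

theorem atBot_hasAntitoneBasis_Iic_neg_natCast :
    (atBot : Filter ℝ).HasAntitoneBasis fun n : ℕ => Iic (-(n : ℝ)) :=
  ⟨atBot_basis.to_hasBasis
    (fun x _ => (exists_nat_ge (-x)).imp fun _ hn => ⟨trivial, Iic_subset_Iic.2 (neg_le.1 hn)⟩)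
    fun n _ => ⟨-(n : ℝ), trivial, Subset.rfl⟩,
    fun _ _ hmn => Iic_subset_Iic.2 (neg_le_neg (Nat.cast_le.2 hmn))⟩

theorem IsSLSol.l2NearLeft_of_forall [IsLocallyFiniteMeasure μ] (hne : T.Nonempty)
    (hκ : μ (tsKappa T)ᶜ = 0) (hg : LocallyIntegrable (fun t => 1 / extK T p t) volume)
    (hr : LocallyIntegrable r μ) (hr0 : 0 ≤ᵐ[μ] r) (hq : LocallyIntegrable q μ) {z₀ : ℂ}
    (hL2 : ∀ f f₁, IsSLSol T μ p (cR r) q z₀ 0 f f₁ → L2NearLeft T μ r f)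
    (hu : IsSLSol T μ p (cR r) q z 0 u u₁) : L2NearLeft T μ r u := by
  by_cases hT : BddBelow T
  · exact .of_bddBelow hT hr hr0 hu.continuous
  have hempty : ⋂ n : ℕ, Iic (-(n : ℝ)) = ∅ :=
    iInter_eq_empty_iff.2 fun x => (exists_nat_gt (-x)).imp fun _ hn => not_le.2 (neg_lt.1 hn)
  have hiff : ∀ {w : ℂ} {f f₁}, IsSLSol T μ p (cR r) q w 0 f f₁ →
      (L2NearLeft T μ r f ↔ IntegrableAtFilter (fun t => r t * ‖f t‖ ^ 2) atBot μ) := fun hf =>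
    l2NearLeft_iff_integrableAtFilter_atBot hne hT hκ hr hr0 hf.continuous
  exact (hiff hu).2 (hu.integrableAtFilter_of_forall
    atBot_hasAntitoneBasis_Iic_neg_natCast (fun _ => ordConnected_Iic) hempty
    hg hr hq fun f f₁ hf => (hiff hf).1 (hL2 f f₁ hf))

theorem IsSLSol.l2NearRight_of_forall [IsLocallyFiniteMeasure μ] (hne : T.Nonempty)
    (hκ : μ (tsKappa T)ᶜ = 0) (hg : LocallyIntegrable (fun t => 1 / extK T p t) volume)
    (hr : LocallyIntegrable r μ) (hr0 : 0 ≤ᵐ[μ] r) (hq : LocallyIntegrable q μ) {z₀ : ℂ}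
    (hL2 : ∀ f f₁, IsSLSol T μ p (cR r) q z₀ 0 f f₁ → L2NearRight T μ r f)
    (hu : IsSLSol T μ p (cR r) q z 0 u u₁) : L2NearRight T μ r u := by
  by_cases hT : BddAbove T
  · exact .of_bddAbove hT hr hr0 hu.continuous
  have hempty : ⋂ n : ℕ, Ici (n : ℝ) = ∅ :=
    iInter_eq_empty_iff.2 fun x => (exists_nat_gt x).imp fun _ => not_le.2
  have hiff : ∀ {w : ℂ} {f f₁}, IsSLSol T μ p (cR r) q w 0 f f₁ →
      (L2NearRight T μ r f ↔ IntegrableAtFilter (fun t => r t * ‖f t‖ ^ 2) atTop μ) := fun hf =>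
    l2NearRight_iff_integrableAtFilter_atTop hne hT hκ hr hr0 hf.continuous
  exact (hiff hu).2 (hu.integrableAtFilter_of_forall atTop_hasAntitoneBasis_of_archimedean
    (fun _ => ordConnected_Ici) hempty hg hr hq fun f f₁ hf => (hiff hf).1 (hL2 f f₁ hf))

theorem weyl_alternative_time_scale_general (T : Set ℝ) (hne : T.Nonempty) (hcl : IsClosed T)
    (μ ν : Measure ℝ)
    (hμ : ∀ c d : ℝ, c ≤ d →
      μ (Set.Ioc c d) = ENNReal.ofReal (tsSigma (tsKappa T) d - tsSigma (tsKappa T) c))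
    (hν : ∀ c d : ℝ, c ≤ d → ν (Set.Ico c d) = ENNReal.ofReal (tsRho T d - tsRho T c))
    (p q : ℝ → ℂ) (r : ℝ → ℝ) (hr : LocallyIntegrable r μ) (hr0 : ∀ᵐ t ∂μ, 0 ≤ r t)
    (hq : LocallyIntegrable q μ) (_hpne : ∀ᵐ t ∂ν, p t ≠ 0)
    (hp : LocallyIntegrable (fun t => 1 / p t) ν) :
    ((∃ z₀ : ℂ, ∀ u u1 : ℝ → ℂ, IsSLSol T μ p (cR r) q z₀ 0 u u1 → L2NearLeft T μ r u) →
      ∀ z : ℂ, ∀ u u1 : ℝ → ℂ, IsSLSol T μ p (cR r) q z 0 u u1 → L2NearLeft T μ r u) ∧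
    ((∃ z₀ : ℂ, ∀ u u1 : ℝ → ℂ, IsSLSol T μ p (cR r) q z₀ 0 u u1 → L2NearRight T μ r u) →
      ∀ z : ℂ, ∀ u u1 : ℝ → ℂ, IsSLSol T μ p (cR r) q z 0 u u1 → L2NearRight T μ r u) := by
  have : IsLocallyFiniteMeasure μ := isLocallyFiniteMeasure_of_forall_Ioo fun c d hcd =>
    (measure_mono Ioo_subset_Ioc_self).trans_lt (hμ c d hcd ▸ ENNReal.ofReal_lt_top)
  have hκ : μ (tsKappa T)ᶜ = 0 :=
    measure_compl_eq_zero_of_Ioc_eq_tsSigma (isClosed_tsKappa hcl) hμ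
  have hg : LocallyIntegrable (fun t => 1 / extK T p t) volume :=
    locallyIntegrable_one_div_extK hne hcl hν hp
  exact ⟨fun ⟨_, hL2⟩ _ _ _ hu => hu.l2NearLeft_of_forall hne hκ hg hr hr0 hq hL2,
    fun ⟨_, hL2⟩ _ _ _ hu => hu.l2NearRight_of_forall hne hκ hg hr hr0 hq hL2⟩

end Alternative

/-- Weyl's alternative: if for some `z₀ ∈ ℂ` every solution of `(ℓ - z₀) u = 0` lies in `L²`
near `a`, then for every `z ∈ ℂ` every solution of `(ℓ - z) u = 0` lies in `L²` near `a`;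
consequently `ℓ` is either in the limit-circle or in the limit-point case at `a`, and
likewise at `b`. -/
theorem weyl_alternative_time_scale
    (T : Set ℝ) (hne : T.Nonempty) (hcl : IsClosed T)
    (hfive : ∃ s : Finset ℝ, ↑s ⊆ T ∧ 5 ≤ s.card)
    (μ ν : Measure ℝ)
    (hμ : ∀ c d : ℝ, c ≤ d →
      μ (Set.Ioc c d) = ENNReal.ofReal (tsSigma (tsKappa T) d - tsSigma (tsKappa T) c))
    (hν : ∀ c d : ℝ, c ≤ d → ν (Set.Ico c d) = ENNReal.ofReal (tsRho T d - tsRho T c))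
    (p r q : ℝ → ℝ)
    (hr : LocallyIntegrable r μ) (hrpos : ∀ᵐ t ∂μ, 0 < r t)
    (hq : LocallyIntegrable q μ)
    (hpne : ∀ᵐ t ∂ν, p t ≠ 0) (hp : LocallyIntegrable (fun t => 1 / p t) ν)
    :
    ((∃ z₀ : ℂ, ∀ u u1 : ℝ → ℂ,
        IsSLSol T μ (cR p) (cR r) (cR q) z₀ 0 u u1 → L2NearLeft T μ r u) →
      ∀ z : ℂ, ∀ u u1 : ℝ → ℂ,
        IsSLSol T μ (cR p) (cR r) (cR q) z 0 u u1 → L2NearLeft T μ r u) ∧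
    (LimitCircleLeft T μ p r q ∨ LimitPointLeft T μ p r q) ∧
    (LimitCircleRight T μ p r q ∨ LimitPointRight T μ p r q) := by
  have hp_cR : LocallyIntegrable (fun t => 1 / cR p t) ν :=
    (locallyIntegrable_cR hp).congr
      (.of_forall fun t => by simp only [cR, Complex.ofReal_div, Complex.ofReal_one])
  have hpne_cR : ∀ᵐ t ∂ν, cR p t ≠ 0 := hpne.mono fun t => Complex.ofReal_ne_zero.2
  obtain ⟨hleft, hright⟩ := weyl_alternative_time_scale_general T hne hcl μ ν hμ hν (cR p) (cR q) r
    hr (hrpos.mono fun t => le_of_lt) (locallyIntegrable_cR hq) hpne_cR hp_cR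
  refine ⟨hleft, or_iff_not_imp_right.2 fun hlp => hleft ?_,
    or_iff_not_imp_right.2 fun hlp => hright ?_⟩
  · simpa only [LimitPointLeft, not_forall, not_exists, not_and_not_right] using hlp
  · simpa only [LimitPointRight, not_forall, not_exists, not_and_not_right] using hlp
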